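/- arXiv:1706.08175 — 3 statements merged into one kernel-verified Lean document; each statement's English description precedes it below -/
import Mathlib

section
/- Let C be an n×m integer matrix, ℓ a prime, and d = v_ℓ(|Ab(C)|), where Ab(C) is the torsion part of ℤ^n/C(ℤ^m). For j ≥ 0 let M_j = { x ∈ ℤ_ℓ^m : Cx ∈ ℓ^j ℤ_ℓ^n } and let \bar{M_j} denote its image in 𝔽_ℓ^m. Suppose there are integers 0 < t_1 < ⋯ < t_j and s_1 > s_2 > ⋯ > s_j > s_{j+1} = dim(\bar{ker C}) such that dim(\bar{M}_{t_i}) ≥ s_i for all i and d = Σ_{i=1}^{j} (s_i − s_{i+1}) t_i. Then the ℓ-elementary divisor multiplicities of C satisfy e_0 = m − s_1, e_{t_i} = s_i − s_{i+1}, and e_a = 0 for every a ∉ {0, t_1, …, t_j}. -/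
open Matrix

noncomputable def redBar (p m : ℕ) [Fact p.Prime] (S : Set (Fin m → ℤ_[p])) :
    Submodule (ZMod p) (Fin m → ZMod p) :=
  Submodule.span (ZMod p)
    ((fun x : Fin m → ℤ_[p] => fun i => PadicInt.toZMod (x i)) '' S)

def Mset (p n m : ℕ) [Fact p.Prime] (C : Matrix (Fin n) (Fin m) ℤ) (j : ℕ) :
    Set (Fin m → ℤ_[p]) :=
  {x | ∀ i, (p : ℤ_[p]) ^ j ∣ ((C.map (Int.cast : ℤ → ℤ_[p])) *ᵥ x) i}

noncomputable def elemDivCount (p : ℕ) {n m : ℕ} (D : Matrix (Fin n) (Fin m) ℤ) (a : ℕ) : ℕ :=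
  Nat.card {ij : Fin n × Fin m // (ij.1 : ℕ) = (ij.2 : ℕ) ∧ D ij.1 ij.2 ≠ 0 ∧
      (p : ℤ) ^ a ∣ D ij.1 ij.2 ∧ ¬ (p : ℤ) ^ (a + 1) ∣ D ij.1 ij.2}

/-- `Ab(C)`: the torsion part of `ℤ^n / C(ℤ^m)`. -/
noncomputable def AbC {n m : ℕ} (C : Matrix (Fin n) (Fin m) ℤ) :=
  Submodule.torsion ℤ ((Fin n → ℤ) ⧸ LinearMap.range C.mulVecLin)

/-!
In Smith coordinates `C` becomes a rectangular diagonal matrix with entries `g k`. It maps a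
`p`-adic vector `y` into the multiples of `c` exactly when `c` divides each `g k * y k`; if
`c ∤ g k`, this makes `y k` a non-unit, so these vectors reduce modulo `p` to the coordinate
subspace of the columns with `c ∣ g k`. Let `v k` be the valuation of `g k`, for `g k ≠ 0`. Then
`d = ∑ v k`, and the reduction of `M_t` has dimension `#{k | t ≤ v k} + s_{J+1}`, so the hypotheses
say `s_i - s_{J+1} ≤ #{k | t_i ≤ v k}`. Rounding each `v k` down to the nearest `t_i` (or to
`t_0 = 0`) and summing by layers gives
`d ≥ ∑ #{k | t_i ≤ v k} (t_i - t_{i-1}) ≥ ∑ (s_i - s_{J+1}) (t_i - t_{i-1})`,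
and the last sum is `∑ (s_i - s_{i+1}) t_i = d` by Abel summation. Equality throughout forces every
`v k` to be `0` or some `t_i`, and `#{k | t_i ≤ v k} = s_i - s_{J+1}`.
-/

section LayerCake

open Finset

theorem sum_succ_sub_castSucc {A : Type*} [AddCommGroup A] {J : ℕ} (f : Fin (J + 1) → A) :
    ∑ i : Fin J, (f i.succ - f i.castSucc) = f (Fin.last J) - f 0 := by
  rw [sum_sub_distrib, sub_eq_sub_iff_add_eq_add, add_comm, ← Fin.sum_univ_succ,
    Fin.sum_univ_castSucc, add_comm]

theorem sum_mul_sub_by_parts {A : Type*} [CommRing A] {J : ℕ} (s T : Fin (J + 1) → A) :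
    ∑ i : Fin J, (s i.castSucc - s i.succ) * (T i.succ - T 0) =
      ∑ i : Fin J, (s i.castSucc - s (Fin.last J)) * (T i.succ - T i.castSucc) := by
  let f (i : Fin (J + 1)) : A := (s (Fin.last J) - s i) * (T i - T 0)
  have hf (i : Fin J) : (s i.castSucc - s i.succ) * (T i.succ - T 0) -
      (s i.castSucc - s (Fin.last J)) * (T i.succ - T i.castSucc) = f i.succ - f i.castSucc := by
    ring
  rw [← sub_eq_zero, ← sum_sub_distrib, sum_congr rfl fun i _ ↦ hf i, sum_succ_sub_castSucc]
  simp [f]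

theorem exists_sum_ite_sub_eq {A : Type*} [AddCommGroup A] [LinearOrder A] {J : ℕ}
    {T : Fin (J + 1) → A} (hT : Monotone T) {x : A} (hx : T 0 ≤ x) :
    ∃ j, T j ≤ x ∧
      ∑ i : Fin J, (if T i.succ ≤ x then T i.succ - T i.castSucc else 0) = T j - T 0 := by
  induction J with
  | zero => exact ⟨0, hx, by simp⟩
  | succ J ih =>
    by_cases hlast : T (Fin.last (J + 1)) ≤ x
    · have hle (i : Fin (J + 1)) : T i.succ ≤ x := (hT (Fin.le_last _)).trans hlast
      exact ⟨Fin.last _, hlast, by simp only [hle, if_true, sum_succ_sub_castSucc]⟩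
    · obtain ⟨j, hj, hsum⟩ :=
        ih (T := T ∘ Fin.castSucc) (hT.comp Fin.strictMono_castSucc.monotone) hx
      refine ⟨j.castSucc, hj, ?_⟩
      rw [Fin.sum_univ_castSucc, Fin.succ_last, if_neg hlast, add_zero]
      exact hsum

theorem sum_card_filter_le_mul_sub {A ι : Type*} [Ring A] [LinearOrder A] {J : ℕ}
    (T : Fin (J + 1) → A) (R : Finset ι) (v : ι → A) :
    ∑ i : Fin J, (#{k ∈ R | T i.succ ≤ v k} : A) * (T i.succ - T i.castSucc) =
      ∑ k ∈ R, ∑ i : Fin J, if T i.succ ≤ v k then T i.succ - T i.castSucc else 0 := by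
  rw [sum_comm]
  exact sum_congr rfl fun i _ ↦ by rw [← sum_filter, sum_const, nsmul_eq_mul]

section OrderedRing

variable {A ι : Type*} [CommRing A] [LinearOrder A] [IsStrictOrderedRing A] {J : ℕ}
  {T s : Fin (J + 1) → A} {R : Finset ι} {v : ι → A}

theorem card_filter_le_eq_and_mem_range_of_sum_eq (hT : StrictMono T) (hv : ∀ k ∈ R, T 0 ≤ v k)
    (hs : ∀ i : Fin J, s i.castSucc - s (Fin.last J) ≤ #{k ∈ R | T i.succ ≤ v k})
    (hsum : ∑ k ∈ R, (v k - T 0) = ∑ i : Fin J, (s i.castSucc - s i.succ) * (T i.succ - T 0)) :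
    (∀ i : Fin J, (#{k ∈ R | T i.succ ≤ v k} : A) = s i.castSucc - s (Fin.last J)) ∧
      ∀ k ∈ R, v k ∈ Set.range T := by
  have hgap (i : Fin J) : 0 < T i.succ - T i.castSucc := sub_pos.2 (hT Fin.castSucc_lt_succ)
  have hweight (i : Fin J) (_ : i ∈ univ) :
      (s i.castSucc - s (Fin.last J)) * (T i.succ - T i.castSucc) ≤
        #{k ∈ R | T i.succ ≤ v k} * (T i.succ - T i.castSucc) :=
    mul_le_mul_of_nonneg_right (hs i) (hgap i).le
  -- `T (j k)` is the largest value of `T` not exceeding `v k`.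
  choose! j hj hfloor using fun k hk ↦ exists_sum_ite_sub_eq hT.monotone (hv k hk)
  have hround (k : ι) (hk : k ∈ R) : T (j k) - T 0 ≤ v k - T 0 := sub_le_sub_right (hj k hk) _
  have hlayer : ∑ i : Fin J, #{k ∈ R | T i.succ ≤ v k} * (T i.succ - T i.castSucc) =
      ∑ k ∈ R, (T (j k) - T 0) := by
    rw [sum_card_filter_le_mul_sub, sum_congr rfl hfloor]
  rw [sum_mul_sub_by_parts] at hsum
  have hweight_eq := (sum_eq_sum_iff_of_le hweight).1 <|
    (sum_le_sum hweight).antisymm (hlayer ▸ (sum_le_sum hround).trans_eq hsum)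
  have hround_eq := (sum_eq_sum_iff_of_le hround).1 <|
    (sum_le_sum hround).antisymm (hsum.trans_le (hlayer ▸ sum_le_sum hweight))
  exact ⟨fun i ↦ (mul_right_cancel₀ (hgap i).ne' (hweight_eq i (mem_univ i))).symm,
    fun k hk ↦ ⟨j k, sub_left_injective (hround_eq k hk)⟩⟩

theorem card_filter_lt_eq_of_sum_eq (hT : StrictMono T) (hv : ∀ k ∈ R, T 0 ≤ v k)
    (hs : ∀ i : Fin J, s i.castSucc - s (Fin.last J) ≤ #{k ∈ R | T i.succ ≤ v k})
    (hsum : ∑ k ∈ R, (v k - T 0) = ∑ i : Fin J, (s i.castSucc - s i.succ) * (T i.succ - T 0))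
    (j : Fin (J + 1)) : (#{k ∈ R | T j < v k} : A) = s j - s (Fin.last J) := by
  obtain ⟨hcard, hrange⟩ := card_filter_le_eq_and_mem_range_of_sum_eq hT hv hs hsum
  induction j using Fin.lastCases with
  | last =>
    rw [sub_self, Nat.cast_eq_zero, card_eq_zero, filter_eq_empty_iff]
    intro k hk
    obtain ⟨i, hi⟩ := hrange k hk
    exact hi ▸ (hT.monotone (Fin.le_last i)).not_gt
  | cast j =>
    rw [← hcard]
    congr 2
    refine filter_congr fun k hk ↦ ?_
    obtain ⟨i, hi⟩ := hrange k hk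
    rw [← hi, hT.lt_iff_lt, hT.le_iff_le, Fin.castSucc_lt_iff_succ_le]

end OrderedRing

theorem card_filter_eq_add_card_filter_lt {ι α : Type*} [LinearOrder α] (R : Finset ι) (v : ι → α)
    (a : α) : #{k ∈ R | v k = a} + #{k ∈ R | a < v k} = #{k ∈ R | a ≤ v k} := by
  classical
  rw [← card_union_of_disjoint, ← filter_or]
  · exact congrArg card (filter_congr fun k _ ↦ by rw [le_iff_eq_or_lt, eq_comm])
  · exact disjoint_filter.2 fun k _ hk ↦ hk.not_gt

theorem card_filter_eq_of_sum_eq {ι : Type*} {J : ℕ} {R : Finset ι} {v : ι → ℕ} {t : Fin J → ℕ}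
    {s : Fin (J + 1) → ℕ} (ht0 : ∀ i, 0 < t i) (ht : StrictMono t) (hs : Antitone s)
    (hle : ∀ i : Fin J, s i.castSucc ≤ #{k ∈ R | t i ≤ v k} + s (Fin.last J))
    (hsum : ∑ k ∈ R, v k = ∑ i : Fin J, (s i.castSucc - s i.succ) * t i) :
    #{k ∈ R | v k = 0} + s 0 = #R + s (Fin.last J) ∧
      (∀ i : Fin J, #{k ∈ R | v k = t i} = s i.castSucc - s i.succ) ∧
      ∀ k ∈ R, v k = 0 ∨ ∃ i, v k = t i := by
  let T (j : Fin (J + 1)) : ℤ := (Fin.cons 0 t : Fin (J + 1) → ℕ) j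
  have hT : StrictMono T := Nat.strictMono_cast.comp (Fin.strictMono_cons.2 ⟨ht0, ht⟩)
  have hT0 (k : ι) (_ : k ∈ R) : T 0 ≤ v k := by simp [T]
  have hsT (i : Fin J) :
      (s i.castSucc - s (Fin.last J) : ℤ) ≤ #{k ∈ R | T i.succ ≤ v k} := by
    simpa [T] using mod_cast hle i
  have hsumT : ∑ k ∈ R, ((v k : ℤ) - T 0) =
      ∑ i : Fin J, ((s i.castSucc : ℤ) - s i.succ) * (T i.succ - T 0) := by
    have hcast (i : Fin J) : ((s i.castSucc - s i.succ : ℕ) : ℤ) = s i.castSucc - s i.succ :=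
      Nat.cast_sub (hs Fin.castSucc_lt_succ.le)
    simpa [T, hcast] using congrArg (Nat.cast : ℕ → ℤ) hsum
  obtain ⟨hcard_le, hrange⟩ :=
    card_filter_le_eq_and_mem_range_of_sum_eq (s := fun j ↦ (s j : ℤ)) hT hT0 hsT hsumT
  have hcard_lt := card_filter_lt_eq_of_sum_eq (s := fun j ↦ (s j : ℤ)) hT hT0 hsT hsumT
  refine ⟨?_, fun i ↦ ?_, fun k hk ↦ ?_⟩
  · have hzero := card_filter_eq_add_card_filter_lt R v 0
    have hpos := hcard_lt 0
    simp only [T, Fin.cons_zero, Nat.cast_lt, zero_le, filter_true] at hzero hpos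
    omega
  · have hlevel := card_filter_eq_add_card_filter_lt R v (t i)
    have hge := hcard_le i
    have hgt := hcard_lt i.succ
    simp only [T, Fin.cons_succ, Nat.cast_le, Nat.cast_lt] at hge hgt
    omega
  · obtain ⟨j, hj⟩ := hrange k hk
    induction j using Fin.cases with
    | zero => exact Or.inl (by simpa [T] using hj.symm)
    | succ i => exact Or.inr ⟨i, by simpa [T] using hj.symm⟩

end LayerCake

section RectDiag

open Finset

variable {R : Type*} {n m : ℕ}

/-- A rectangular matrix vanishing off its main diagonal; `Matrix.IsDiag` covers only square
matrices. -/
def IsRectDiag [Zero R] (D : Matrix (Fin n) (Fin m) R) : Prop :=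
  ∀ (i : Fin n) (j : Fin m), (i : ℕ) ≠ j → D i j = 0

/-- The `k`-th entry of the main diagonal of a rectangular matrix, extended by `0` past the last
row or column so that rows and columns can be indexed alike. -/
def diagEntry [Zero R] (D : Matrix (Fin n) (Fin m) R) (k : ℕ) : R :=
  if h : k < n ∧ k < m then D ⟨k, h.1⟩ ⟨k, h.2⟩ else 0

/-- The columns in which the main diagonal of a rectangular matrix has a nonzero entry. -/
def diagSupport [Zero R] [DecidableEq R] (D : Matrix (Fin n) (Fin m) R) : Finset (Fin m) :=
  {k | diagEntry D k ≠ 0}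

theorem lt_and_lt_of_diagEntry_ne_zero [Zero R] {D : Matrix (Fin n) (Fin m) R} {k : ℕ}
    (hk : diagEntry D k ≠ 0) : k < n ∧ k < m :=
  of_not_not fun h ↦ hk (dif_neg h)

theorem apply_eq_diagEntry [Zero R] (D : Matrix (Fin n) (Fin m) R) {i : Fin n} {j : Fin m}
    (hij : (i : ℕ) = j) : D i j = diagEntry D j := by
  have hj : (j : ℕ) < n ∧ (j : ℕ) < m := ⟨hij ▸ i.2, j.2⟩
  rw [diagEntry, dif_pos hj, Fin.ext (a := i) (b := ⟨j, hj.1⟩) hij]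

theorem sum_diagEntry_eq [Zero R] {A : Type*} [AddCommMonoid A] (D : Matrix (Fin n) (Fin m) R)
    {f : R → A} (hf : f 0 = 0) :
    ∑ i : Fin n, f (diagEntry D i) = ∑ j : Fin m, f (diagEntry D j) := by
  have hvanish {k : ℕ} (hk : ¬(k < n ∧ k < m)) : f (diagEntry D k) = 0 := by
    rw [diagEntry, dif_neg hk, hf]
  rw [Fin.sum_univ_eq_sum_range fun k ↦ f (diagEntry D k),
    Fin.sum_univ_eq_sum_range fun k ↦ f (diagEntry D k)]
  trans ∑ k ∈ range (min n m), f (diagEntry D k)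
  · refine (sum_subset (range_subset_range.2 (min_le_left n m)) fun k _ hk ↦ hvanish ?_).symm
    rwa [mem_range, lt_min_iff] at hk
  · refine sum_subset (range_subset_range.2 (min_le_right n m)) fun k _ hk ↦ hvanish ?_
    rwa [mem_range, lt_min_iff] at hk

theorem diagEntry_map {S : Type*} [Zero R] [Zero S] (D : Matrix (Fin n) (Fin m) R) {f : R → S}
    (hf : f 0 = 0) (k : ℕ) : diagEntry (D.map f) k = f (diagEntry D k) := by
  unfold diagEntry
  split_ifs
  · rfl
  · exact hf.symm

theorem IsRectDiag.map {S : Type*} [Zero R] [Zero S] {D : Matrix (Fin n) (Fin m) R}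
    (hD : IsRectDiag D) {f : R → S} (hf : f 0 = 0) : IsRectDiag (D.map f) := fun i j hij ↦ by
  rw [map_apply, hD i j hij, hf]

theorem IsRectDiag.mulVec_apply [NonUnitalNonAssocSemiring R] {D : Matrix (Fin n) (Fin m) R}
    (hD : IsRectDiag D) (y : Fin m → R) (i : Fin n) :
    (D *ᵥ y) i = if h : (i : ℕ) < m then diagEntry D i * y ⟨i, h⟩ else 0 := by
  rw [mulVec, dotProduct]
  split_ifs with h
  · rw [sum_eq_single_of_mem (⟨i, h⟩ : Fin m) (mem_univ _), apply_eq_diagEntry D rfl]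
    intro j _ hj
    rw [hD i j fun hij ↦ hj (Fin.ext hij.symm), zero_mul]
  · exact sum_eq_zero fun j _ ↦ by rw [hD i j fun hij ↦ h (hij ▸ j.2), zero_mul]

theorem IsRectDiag.forall_dvd_mulVec_iff [CommSemiring R] {D : Matrix (Fin n) (Fin m) R}
    (hD : IsRectDiag D) {c : R} {y : Fin m → R} :
    (∀ i, c ∣ (D *ᵥ y) i) ↔ ∀ k : Fin m, c ∣ diagEntry D k * y k := by
  constructor
  · intro h k
    by_cases hk : diagEntry D k = 0
    · simp [hk]
    · simpa [hD.mulVec_apply] using h ⟨k, (lt_and_lt_of_diagEntry_ne_zero hk).1⟩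
  · intro h i
    rw [hD.mulVec_apply]
    split_ifs with hi
    · exact h ⟨i, hi⟩
    · exact dvd_zero c

theorem IsRectDiag.range_mulVecLin [CommRing R] {D : Matrix (Fin n) (Fin m) R}
    (hD : IsRectDiag D) :
    LinearMap.range D.mulVecLin =
      Submodule.pi Set.univ fun i : Fin n ↦ Ideal.span {diagEntry D i} := by
  ext w
  simp only [LinearMap.mem_range, mulVecLin_apply, Submodule.mem_pi, Set.mem_univ,
    forall_true_left, Ideal.mem_span_singleton]
  constructor
  · rintro ⟨y, rfl⟩ i
    rw [hD.mulVec_apply]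
    split_ifs
    · exact dvd_mul_right _ _
    · exact dvd_zero _
  · intro h
    choose q hq using h
    refine ⟨fun j ↦ if hj : (j : ℕ) < n then q ⟨j, hj⟩ else 0, funext fun i ↦ ?_⟩
    rw [hD.mulVec_apply, hq i]
    by_cases him : (i : ℕ) < m
    · rw [dif_pos him, dif_pos i.2]
    · rw [dif_neg him, of_not_not fun h0 ↦ him (lt_and_lt_of_diagEntry_ne_zero h0).2, zero_mul]

end RectDiag

section Equivalence

theorem forall_dvd_mulVec {R n m : Type*} [NonUnitalCommSemiring R] [Fintype m]
    {A : Matrix n m R} {c : R} {w : m → R} (hw : ∀ j, c ∣ w j) (i : n) : c ∣ (A *ᵥ w) i :=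
  Finset.dvd_sum fun j _ ↦ (hw j).mul_left _

variable {R n m : Type*} [CommRing R] [Fintype n] [Fintype m] [DecidableEq n] [DecidableEq m]
  {P : Matrix n n R} {Q : Matrix m m R}

theorem forall_dvd_mulVec_iff_of_isUnit (hP : IsUnit P) {c : R} {w : n → R} :
    (∀ i, c ∣ (P *ᵥ w) i) ↔ ∀ i, c ∣ w i := by
  obtain ⟨P, rfl⟩ := hP
  refine ⟨fun h ↦ ?_, forall_dvd_mulVec⟩
  simpa [mulVec_mulVec] using forall_dvd_mulVec (A := (P⁻¹).1) h

theorem setOf_dvd_mulVec_eq_image (C : Matrix n m R) (hP : IsUnit P) (hQ : IsUnit Q) (c : R) :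
    {x | ∀ i, c ∣ (C *ᵥ x) i} = (Q *ᵥ ·) '' {y | ∀ i, c ∣ ((P * C * Q) *ᵥ y) i} := by
  have hpull (y : m → R) : (∀ i, c ∣ ((P * C * Q) *ᵥ y) i) ↔ ∀ i, c ∣ (C *ᵥ (Q *ᵥ y)) i := by
    rw [← mulVec_mulVec, ← mulVec_mulVec, forall_dvd_mulVec_iff_of_isUnit hP]
  simp only [hpull]
  exact (Set.image_preimage_eq {x | ∀ i, c ∣ (C *ᵥ x) i} (mulVec_surjective_iff_isUnit.2 hQ)).symm

/-- The isomorphism of cokernels of equivalent matrices induced by the change of coordinates in the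
target. -/
noncomputable def cokernelEquivOfIsUnit (C : Matrix n m R) (hP : IsUnit P) (hQ : IsUnit Q) :
    ((n → R) ⧸ LinearMap.range C.mulVecLin) ≃ₗ[R]
      (n → R) ⧸ LinearMap.range (P * C * Q).mulVecLin :=
  Submodule.Quotient.equiv _ _ (P.toLinearEquiv' hP.invertible) <| by
    have hQtop : LinearMap.range Q.mulVecLin = ⊤ :=
      LinearMap.range_eq_top.2 (mulVec_surjective_iff_isUnit.2 hQ)
    rw [mulVecLin_mul, mulVecLin_mul, LinearMap.range_comp_of_range_eq_top _ hQtop,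
      LinearMap.range_comp]
    rfl

end Equivalence

section Torsion

variable {R : Type*} [CommSemiring R]

theorem torsion_eq_comap {M N : Type*} [AddCommMonoid M] [AddCommMonoid N] [Module R M] [Module R N]
    {f : M →ₗ[R] N} (hf : Function.Injective f) :
    Submodule.torsion R M = (Submodule.torsion R N).comap f := by
  ext x
  simp only [Submodule.mem_comap, Submodule.mem_torsion_iff, Submonoid.smul_def, ← map_smul,
    map_eq_zero_iff f hf]

theorem natCard_torsion_congr {M N : Type*} [AddCommMonoid M] [AddCommMonoid N] [Module R M]
    [Module R N] (e : M ≃ₗ[R] N) :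
    Nat.card (Submodule.torsion R M) = Nat.card (Submodule.torsion R N) := by
  rw [torsion_eq_comap (f := e.toLinearMap) e.injective]
  exact Nat.card_congr (e.toEquiv.subtypeEquiv fun _ ↦ Iff.rfl)

theorem torsion_pi {ι : Type*} [Finite ι] (M : ι → Type*) [∀ i, AddCommMonoid (M i)]
    [∀ i, Module R (M i)] :
    Submodule.torsion R (∀ i, M i) = Submodule.pi Set.univ fun i ↦ Submodule.torsion R (M i) := by
  cases nonempty_fintype ι
  ext x
  simp only [Submodule.mem_pi, Set.mem_univ, forall_true_left, Submodule.mem_torsion_iff]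
  constructor
  · rintro ⟨a, ha⟩ i
    exact ⟨a, congrFun ha i⟩
  · intro h
    choose a ha using h
    refine ⟨∏ i, a i, funext fun i ↦ ?_⟩
    obtain ⟨b, hb⟩ := Finset.dvd_prod_of_mem a (Finset.mem_univ i)
    rw [Pi.smul_apply, hb, mul_comm, mul_smul, ha, smul_zero, Pi.zero_apply]

theorem natCard_torsion_pi {ι : Type*} [Fintype ι] (M : ι → Type*) [∀ i, AddCommMonoid (M i)]
    [∀ i, Module R (M i)] :
    Nat.card (Submodule.torsion R (∀ i, M i)) = ∏ i, Nat.card (Submodule.torsion R (M i)) := by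
  rw [torsion_pi, ← Nat.card_pi]
  exact Nat.card_congr <| (Equiv.subtypeEquivRight fun x ↦ by simp [Submodule.mem_pi]).trans
    Equiv.subtypePiEquivPi

theorem natCard_torsion_int_quotient_span (g : ℤ) :
    Nat.card (Submodule.torsion ℤ (ℤ ⧸ Ideal.span {g})) = if g = 0 then 1 else g.natAbs := by
  split_ifs with hg
  · subst hg
    rw [natCard_torsion_congr (Submodule.quotEquivOfEqBot _ (Ideal.span_singleton_eq_bot.2 rfl)),
      Submodule.isTorsionFree_iff_torsion_eq_bot.1 inferInstance, Nat.card_unique]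
  · have htop : Submodule.torsion ℤ (ℤ ⧸ Ideal.span {g}) = ⊤ := by
      refine Submodule.eq_top_iff'.2 fun x ↦ ?_
      refine (Submodule.mem_torsion_iff x).2 ⟨⟨g, mem_nonZeroDivisors_of_ne_zero hg⟩, ?_⟩
      obtain ⟨x, rfl⟩ := Ideal.Quotient.mk_surjective x
      exact Ideal.Quotient.eq_zero_iff_dvd _ _ |>.2 (dvd_mul_right g x)
    rw [htop, Nat.card_congr Submodule.topEquiv.toEquiv,
      Nat.card_congr (Int.quotientSpanEquivZMod g).toEquiv, Nat.card_zmod]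

end Torsion

section Reduction

variable {p : ℕ} [Fact p.Prime] {n m : ℕ}

theorem redBar_image_mulVec (Q : Matrix (Fin m) (Fin m) ℤ_[p]) (S : Set (Fin m → ℤ_[p])) :
    redBar p m ((Q *ᵥ ·) '' S) = (redBar p m S).map (Q.map PadicInt.toZMod).mulVecLin := by
  rw [redBar, redBar, Submodule.map_span, Set.image_image, Set.image_image]
  exact congrArg _ (Set.image_congr fun x _ ↦ funext (RingHom.map_mulVec PadicInt.toZMod Q x))

theorem finrank_redBar_image_mulVec {Q : Matrix (Fin m) (Fin m) ℤ_[p]} (hQ : IsUnit Q)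
    (S : Set (Fin m → ℤ_[p])) :
    Module.finrank (ZMod p) (redBar p m ((Q *ᵥ ·) '' S)) =
      Module.finrank (ZMod p) (redBar p m S) := by
  have hinj : Function.Injective (Q.map PadicInt.toZMod).mulVecLin :=
    mulVec_injective_of_isUnit (hQ.map PadicInt.toZMod.mapMatrix)
  rw [redBar_image_mulVec]
  exact (Submodule.equivMapOfInjective _ hinj _).finrank_eq.symm

theorem isUnit_of_toZMod_ne_zero {x : ℤ_[p]} (hx : PadicInt.toZMod x ≠ 0) : IsUnit x := by
  rwa [← not_not (a := IsUnit x), ← mem_nonunits_iff, ← IsLocalRing.mem_maximalIdeal,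
    ← PadicInt.ker_toZMod, RingHom.mem_ker]

theorem IsRectDiag.redBar_setOf_dvd_mulVec {D : Matrix (Fin n) (Fin m) ℤ_[p]} (hD : IsRectDiag D)
    (c : ℤ_[p]) :
    redBar p m {y | ∀ i, c ∣ (D *ᵥ y) i} =
      Submodule.span (ZMod p) (Pi.basisFun (ZMod p) (Fin m) '' {k | c ∣ diagEntry D k}) := by
  simp only [hD.forall_dvd_mulVec_iff]
  refine le_antisymm (Submodule.span_le.2 ?_) (Submodule.span_mono ?_)
  · rintro _ ⟨y, hy, rfl⟩
    refine (Pi.basisFun (ZMod p) (Fin m)).mem_span_image.2 fun k hk ↦ ?_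
    have hunit : IsUnit (y k) := isUnit_of_toZMod_ne_zero (by simpa using hk)
    exact hunit.dvd_mul_right.1 (hy k)
  · rintro _ ⟨k, hk, rfl⟩
    refine ⟨Pi.single k 1, fun j ↦ ?_, funext fun j ↦ ?_⟩
    · obtain rfl | hj := eq_or_ne j k
      · exact hk.mul_right _
      · simp [hj]
    · simp only [Pi.single_apply, Pi.basisFun_apply]
      split_ifs <;> simp

theorem IsRectDiag.finrank_redBar_setOf_dvd_mulVec {D : Matrix (Fin n) (Fin m) ℤ_[p]}
    (hD : IsRectDiag D) (c : ℤ_[p]) :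
    Module.finrank (ZMod p) (redBar p m {y | ∀ i, c ∣ (D *ᵥ y) i}) =
      {k : Fin m | c ∣ diagEntry D k}.ncard := by
  classical
  rw [hD.redBar_setOf_dvd_mulVec, Set.image_eq_range, finrank_span_eq_card,
    Set.ncard_eq_toFinset_card', Set.toFinset_card]
  exact (Pi.basisFun (ZMod p) (Fin m)).linearIndependent.comp _ Subtype.val_injective

variable {C : Matrix (Fin n) (Fin m) ℤ} {P : Matrix (Fin n) (Fin n) ℤ}
  {Q : Matrix (Fin m) (Fin m) ℤ}

theorem finrank_redBar_setOf_dvd_mulVec (hP : IsUnit P) (hQ : IsUnit Q)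
    (hD : IsRectDiag (P * C * Q)) (c : ℤ_[p]) :
    Module.finrank (ZMod p)
        (redBar p m {x | ∀ i, c ∣ (C.map (Int.cast : ℤ → ℤ_[p]) *ᵥ x) i}) =
      {k : Fin m | c ∣ ((diagEntry (P * C * Q) k : ℤ) : ℤ_[p])}.ncard := by
  let φ := Int.castRingHom ℤ_[p]
  have hφ : (P * C * Q).map φ = φ.mapMatrix P * C.map φ * φ.mapMatrix Q := by
    simp only [Matrix.map_mul, RingHom.mapMatrix_apply]
  have hQφ : IsUnit (φ.mapMatrix Q) := hQ.map _
  have hdiag := (hD.map (map_zero φ)).finrank_redBar_setOf_dvd_mulVec c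
  simp only [diagEntry_map _ (map_zero φ)] at hdiag
  rw [hφ, ← finrank_redBar_image_mulVec hQφ,
    ← setOf_dvd_mulVec_eq_image (C.map φ) (hP.map φ.mapMatrix) hQφ c] at hdiag
  exact hdiag

theorem finrank_redBar_ker (hP : IsUnit P) (hQ : IsUnit Q) (hD : IsRectDiag (P * C * Q)) :
    Module.finrank (ZMod p)
        (redBar p m (LinearMap.ker (C.map (Int.cast : ℤ → ℤ_[p])).mulVecLin)) +
      (diagSupport (P * C * Q)).card = m := by
  have hker : (LinearMap.ker (C.map (Int.cast : ℤ → ℤ_[p])).mulVecLin : Set (Fin m → ℤ_[p])) =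
      {x | ∀ i, 0 ∣ (C.map (Int.cast : ℤ → ℤ_[p]) *ᵥ x) i} := by
    ext x
    simp [funext_iff]
  have hcompl : {k : Fin m | (0 : ℤ_[p]) ∣ ((diagEntry (P * C * Q) k : ℤ) : ℤ_[p])} =
      ((diagSupport (P * C * Q))ᶜ : Finset (Fin m)) := by
    ext k
    simp [diagSupport]
  rw [hker, finrank_redBar_setOf_dvd_mulVec hP hQ hD, hcompl, Set.ncard_coe_finset,
    Finset.card_compl_add_card, Fintype.card_fin]

theorem finrank_redBar_Mset (hP : IsUnit P) (hQ : IsUnit Q) (hD : IsRectDiag (P * C * Q)) (t : ℕ) :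
    Module.finrank (ZMod p) (redBar p m (Mset p n m C t)) =
      {k ∈ diagSupport (P * C * Q) | t ≤ padicValInt p (diagEntry (P * C * Q) (k : Fin m))}.card +
        Module.finrank (ZMod p)
          (redBar p m (LinearMap.ker (C.map (Int.cast : ℤ → ℤ_[p])).mulVecLin)) := by
  have hset : {k : Fin m | (p : ℤ_[p]) ^ t ∣ ((diagEntry (P * C * Q) k : ℤ) : ℤ_[p])} =
      ({k ∈ diagSupport (P * C * Q) | t ≤ padicValInt p (diagEntry (P * C * Q) (k : Fin m))} ∪
        (diagSupport (P * C * Q))ᶜ : Finset (Fin m)) := by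
    ext k
    simp only [Set.mem_ofPred_eq, PadicInt.pow_p_dvd_int_iff, padicValInt_dvd_iff, diagSupport,
      Finset.coe_union, Set.mem_union, Finset.mem_coe, Finset.mem_filter, Finset.mem_univ,
      Finset.mem_compl]
    tauto
  have hdisj : Disjoint
      {k ∈ diagSupport (P * C * Q) | t ≤ padicValInt p (diagEntry (P * C * Q) (k : Fin m))}
      (diagSupport (P * C * Q))ᶜ :=
    disjoint_compl_right.mono_left (Finset.filter_subset _ _)
  have hker := finrank_redBar_ker (p := p) hP hQ hD
  have hcompl := Finset.card_compl_add_card (diagSupport (P * C * Q))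
  rw [Fintype.card_fin] at hcompl
  rw [Mset, finrank_redBar_setOf_dvd_mulVec hP hQ hD, hset, Set.ncard_coe_finset,
    Finset.card_union_of_disjoint hdisj]
  omega

end Reduction

section ElementaryDivisors

open Finset

variable {p : ℕ} [Fact p.Prime] {n m : ℕ}

theorem padicValNat_prod {ι : Type*} (S : Finset ι) {f : ι → ℕ} (hf : ∀ i ∈ S, f i ≠ 0) :
    padicValNat p (∏ i ∈ S, f i) = ∑ i ∈ S, padicValNat p (f i) := by
  simp only [← Nat.factorization_def _ (Fact.out : p.Prime)]
  exact Nat.factorization_prod_apply hf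

theorem natCard_AbC {C : Matrix (Fin n) (Fin m) ℤ} {P : Matrix (Fin n) (Fin n) ℤ}
    {Q : Matrix (Fin m) (Fin m) ℤ} (hP : IsUnit P) (hQ : IsUnit Q) (hD : IsRectDiag (P * C * Q)) :
    Nat.card (AbC C) = ∏ i : Fin n,
      if diagEntry (P * C * Q) i = 0 then 1 else (diagEntry (P * C * Q) i).natAbs := by
  have e := (cokernelEquivOfIsUnit C hP hQ).trans <|
    (Submodule.quotEquivOfEq _ _ hD.range_mulVecLin).trans (Submodule.quotientPi _)
  rw [AbC, natCard_torsion_congr e, natCard_torsion_pi]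
  exact prod_congr rfl fun i _ ↦ natCard_torsion_int_quotient_span _

theorem padicValNat_natCard_AbC {C : Matrix (Fin n) (Fin m) ℤ} {P : Matrix (Fin n) (Fin n) ℤ}
    {Q : Matrix (Fin m) (Fin m) ℤ} (hP : IsUnit P) (hQ : IsUnit Q) (hD : IsRectDiag (P * C * Q)) :
    padicValNat p (Nat.card (AbC C)) =
      ∑ k ∈ diagSupport (P * C * Q), padicValInt p (diagEntry (P * C * Q) k) := by
  have hval (g : ℤ) : padicValNat p (if g = 0 then 1 else g.natAbs) = padicValInt p g := by
    split_ifs with hg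
    · simp [hg]
    · rfl
  rw [natCard_AbC hP hQ hD, padicValNat_prod]
  · simp only [hval]
    rw [sum_diagEntry_eq _ padicValInt.zero, diagSupport, sum_filter_of_ne]
    rintro k - hk h0
    exact hk (by rw [h0, padicValInt.zero])
  · intro i _
    split_ifs with hi
    · exact one_ne_zero
    · exact Int.natAbs_ne_zero.2 hi

theorem pow_dvd_and_not_pow_succ_dvd_iff {g : ℤ} (hg : g ≠ 0) (a : ℕ) :
    ((p : ℤ) ^ a ∣ g ∧ ¬(p : ℤ) ^ (a + 1) ∣ g) ↔ padicValInt p g = a := by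
  simp only [padicValInt_dvd_iff, hg, false_or]
  omega

theorem elemDivCount_eq_card (D : Matrix (Fin n) (Fin m) ℤ) (a : ℕ) :
    elemDivCount p D a = #{k ∈ diagSupport D | padicValInt p (diagEntry D (k : Fin m)) = a} := by
  rw [elemDivCount, ← Nat.card_eq_finsetCard]
  have hmem {i : Fin n} {j : Fin m} (hij : (i : ℕ) = j) :
      (D i j ≠ 0 ∧ (p : ℤ) ^ a ∣ D i j ∧ ¬(p : ℤ) ^ (a + 1) ∣ D i j) ↔
        j ∈ ({k ∈ diagSupport D | padicValInt p (diagEntry D (k : Fin m)) = a} : Finset _) := by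
    rw [apply_eq_diagEntry D hij, mem_filter, diagSupport, mem_filter_univ]
    exact and_congr_right fun h0 ↦ pow_dvd_and_not_pow_succ_dvd_iff h0 a
  refine Nat.card_eq_of_bijective (fun x ↦ ⟨x.1.2, (hmem x.2.1).1 x.2.2⟩) ⟨?_, ?_⟩
  · rintro ⟨⟨i, j⟩, hij, _⟩ ⟨⟨i', j'⟩, hij', _⟩ hjj'
    obtain rfl : j = j' := congrArg Subtype.val hjj'
    exact Subtype.ext (Prod.ext (Fin.ext (hij.trans hij'.symm)) rfl)
  · rintro ⟨k, hk⟩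
    have hkn : (k : ℕ) < n := (lt_and_lt_of_diagEntry_ne_zero <|
      (mem_filter_univ k).1 (mem_filter.1 hk).1).1
    exact ⟨⟨(⟨k, hkn⟩, k), rfl, (hmem rfl).2 hk⟩, rfl⟩

end ElementaryDivisors

theorem stmt1 (p n m : ℕ) [Fact p.Prime] (C : Matrix (Fin n) (Fin m) ℤ)
    (P : Matrix (Fin n) (Fin n) ℤ) (Q : Matrix (Fin m) (Fin m) ℤ)
    (hP : IsUnit P.det) (hQ : IsUnit Q.det)
    (hdiag : ∀ (i : Fin n) (j : Fin m), ((i : ℕ) ≠ (j : ℕ)) → (P * C * Q) i j = 0)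
    (d : ℕ) (hd : d = padicValNat p (Nat.card (AbC C)))
    (J : ℕ) (t : Fin J → ℕ) (s : Fin (J + 1) → ℕ)
    (ht0 : ∀ i, 0 < t i) (htmono : StrictMono t) (hsanti : StrictAnti s)
    (hslast : s (Fin.last J)
      = Module.finrank (ZMod p)
          (redBar p m ((LinearMap.ker (C.map (Int.cast : ℤ → ℤ_[p])).mulVecLin : Set (Fin m → ℤ_[p])))))
    (hdims : ∀ i : Fin J,
      s i.castSucc ≤ Module.finrank (ZMod p) (redBar p m (Mset p n m C (t i))))
    (hsum : d = ∑ i : Fin J, (s i.castSucc - s i.succ) * t i) :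
    elemDivCount p (P * C * Q) 0 = m - s 0
    ∧ (∀ i : Fin J, elemDivCount p (P * C * Q) (t i) = s i.castSucc - s i.succ)
    ∧ ∀ a : ℕ, a ≠ 0 → (∀ i : Fin J, a ≠ t i) → elemDivCount p (P * C * Q) a = 0 := by
  rw [← isUnit_iff_isUnit_det] at hP hQ
  have hker := finrank_redBar_ker (p := p) hP hQ hdiag
  rw [← hslast] at hker
  simp only [finrank_redBar_Mset hP hQ hdiag, ← hslast] at hdims
  rw [hd, padicValNat_natCard_AbC hP hQ hdiag] at hsum
  obtain ⟨hzero, hlevel, hrange⟩ :=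
    card_filter_eq_of_sum_eq ht0 htmono hsanti.antitone hdims hsum
  simp only [elemDivCount_eq_card]
  refine ⟨by omega, hlevel, fun a ha0 hat ↦ ?_⟩
  rw [Finset.card_eq_zero, Finset.filter_eq_empty_iff]
  rintro k hk rfl
  obtain h0 | ⟨i, hi⟩ := hrange k hk
  exacts [ha0 h0, hat i hi]
end

section
/- Let Γ be a connected strongly regular graph with Laplacian L = kI − A, nonzero Laplacian eigenvalues t = k − r (multiplicity f) and u = k − s (multiplicity g), and μ > 0. Let ℓ be a prime with ℓ ∣ t, ℓ ∤ u, set a = v_ℓ(μ), and assume v_ℓ(t) = a + c and v_ℓ(v) = c, where v is the number of vertices. If a = 0 and c > 0, then the ℓ-elementary divisors of the critical group K are: ℓ^0 with multiplicity g + 1 and ℓ^c with multiplicity f − 1, and no others. -/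
open Matrix Polynomial

noncomputable def elemDivCountSq {V : Type*} (p : ℕ) (D : Matrix V V ℤ) (a : ℕ) : ℕ :=
  Nat.card {i : V // D i i ≠ 0 ∧ (p : ℤ) ^ a ∣ D i i ∧ ¬ (p : ℤ) ^ (a + 1) ∣ D i i}

/-!
A symmetric integer matrix `L` with zero row sums and characteristic polynomial
`X (X - t)^f (X - u)^g` satisfies `(L - t) (L - u) = m J`, where `J` is the all-ones matrix and
`|V| m = t u`; the valuations then force `ℓ ∤ m`. Let `P L Q` be diagonal with entries `d i`.
Reading the identity in three rings determines the `ℓ`-adic valuations of the `d i`.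

* Modulo `ℓ` it says `L (L - u) = m J ≠ 0`, so that the generalized `0`-eigenspace of `L` is one
  dimension larger than its kernel: exactly `f` of the `d i` are divisible by `ℓ`.
* Modulo `ℓ^c` it gives a `Y` with `L Y L = ε L`, `ε` a unit, whence a nilpotent `d i` vanishes:
  `ℓ ∣ d i` implies `ℓ^c ∣ d i`.
* Over `ℤ` it gives `L W = m J - t u`, a rank one matrix minus a scalar not divisible by
  `ℓ^(c+1)`: at most one `d i` is divisible by `ℓ^(c+1)`, and since `det L = 0` that one is `0`.
-/

open Module

section Symmetric

variable {n R : Type*} [Fintype n] [CommRing R] {A : Matrix n n R}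

lemma eq_zero_of_isSymm_of_mul_self_eq_zero [LinearOrder R] [IsStrictOrderedRing R]
    (hA : A.IsSymm) (h : A * A = 0) : A = 0 := by
  ext i j
  have hi : A i ⬝ᵥ A i = 0 := by
    calc A i ⬝ᵥ A i = (A * Aᵀ) i i := rfl
      _ = 0 := by rw [hA.eq, h, Matrix.zero_apply]
  exact congrFun (dotProduct_self_eq_zero.1 hi) j

variable [DecidableEq n]

lemma isSymm_aeval (hA : A.IsSymm) (p : R[X]) : (aeval A p).IsSymm := by
  rw [Matrix.IsSymm, aeval_eq_sum_range, transpose_sum]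
  exact Finset.sum_congr rfl fun i _ => ((hA.pow i).smul _).eq

variable [LinearOrder R] [IsStrictOrderedRing R]

lemma eq_zero_of_isSymm_of_isNilpotent (hA : A.IsSymm) (h : IsNilpotent A) : A = 0 := by
  obtain ⟨k, hk⟩ := h
  have hpow : A ^ 2 ^ k = 0 := pow_eq_zero_of_le Nat.lt_two_pow_self.le hk
  clear hk
  induction k with
  | zero => simpa using hpow
  | succ k ih =>
    refine ih (eq_zero_of_isSymm_of_mul_self_eq_zero (hA.pow _) ?_)
    rw [← pow_add, ← two_mul, ← pow_succ', hpow]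

lemma aeval_eq_zero_of_charpoly_dvd_pow (hA : A.IsSymm) {p : R[X]} {k : ℕ}
    (h : A.charpoly ∣ p ^ k) : aeval A p = 0 := by
  refine eq_zero_of_isSymm_of_isNilpotent (isSymm_aeval hA p) ⟨k, ?_⟩
  obtain ⟨q, hq⟩ := h
  rw [← map_pow, hq, map_mul, aeval_self_charpoly, zero_mul]

end Symmetric

section Charpoly

variable {n R : Type*} [Fintype n] [DecidableEq n] [CommRing R]

lemma rootMultiplicity_zero_X_pow_mul {q : R[X]} (hq : q.eval 0 ≠ 0) (k : ℕ) :
    (X ^ k * q).rootMultiplicity 0 = k := by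
  have hq0 : q ≠ 0 := by rintro rfl; simp at hq
  have := rootMultiplicity_mul_X_sub_C_pow (n := k) (a := 0) hq0
  rwa [map_zero, sub_zero, mul_comm, rootMultiplicity_eq_zero hq, zero_add] at this

lemma charpoly_smul_one_sub (A : Matrix n n R) (μ : R) :
    (μ • (1 : Matrix n n R) - A).charpoly
      = (-1) ^ Fintype.card n * A.charpoly.comp (C μ - X) := by
  have h : charmatrix (μ • (1 : Matrix n n R) - A)
      = -(compRingHom (C μ - X)).mapMatrix (charmatrix A) := by
    ext1 i j
    by_cases hij : i = j
    · subst hij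
      simp only [charmatrix_apply_eq, Matrix.sub_apply, Matrix.smul_apply, one_apply_eq,
        smul_eq_mul, mul_one, map_sub, RingHom.mapMatrix_apply, coe_compRingHom,
        Matrix.neg_apply, map_apply, sub_comp, X_comp, C_comp, neg_sub]
      ring
    · simp [hij]
  rw [charpoly, h, det_neg, ← RingHom.map_det]
  rfl

variable [Nontrivial R] {A : Matrix n n R} {f g : ℕ}

lemma card_eq_of_charpoly_eq {a b c : R}
    (h : A.charpoly = (X - C a) * (X - C b) ^ f * (X - C c) ^ g) :
    Fintype.card n = 1 + f + g := by
  rw [← A.charpoly_natDegree_eq_dim, h]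
  have ha := monic_X_sub_C a
  have hb := (monic_X_sub_C b).pow f
  have hc := (monic_X_sub_C c).pow g
  rw [(ha.mul hb).natDegree_mul hc, ha.natDegree_mul hb, (monic_X_sub_C b).natDegree_pow,
    (monic_X_sub_C c).natDegree_pow]
  simp only [natDegree_X_sub_C, mul_one]

lemma charpoly_smul_one_sub_of_charpoly_eq {k r s : R}
    (h : A.charpoly = (X - C k) * (X - C r) ^ f * (X - C s) ^ g) :
    (k • (1 : Matrix n n R) - A).charpoly
      = X * (X - C (k - r)) ^ f * (X - C (k - s)) ^ g := by
  have hX (a : R) : C k - X - C a = -1 * (X - C (k - a)) := by rw [map_sub]; ring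
  have h1 : (-1 : R[X]) ^ (1 + f + g) * (-1) ^ (1 + f + g) = 1 := by
    rw [← mul_pow]; simp
  rw [charpoly_smul_one_sub, card_eq_of_charpoly_eq h, h]
  simp only [mul_comp, pow_comp, sub_comp, X_comp, C_comp, hX, sub_self, map_zero, mul_pow]
  linear_combination (X * (X - C (k - r)) ^ f * (X - C (k - s)) ^ g) * h1

end Charpoly

section Map

variable {n R S : Type*} [Fintype n] [CommRing R] [CommRing S] (φ : R →+* S)

lemma map_mulVec_comp_eq_zero {A : Matrix n n R} {x : n → R} (h : A *ᵥ x = 0) :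
    A.map φ *ᵥ (φ ∘ x) = 0 := by
  ext i
  rw [← RingHom.map_mulVec, h, Pi.zero_apply, map_zero, Pi.zero_apply]

variable [DecidableEq n]

lemma isUnit_det_map {P : Matrix n n R} (hP : IsUnit P.det) : IsUnit (P.map φ).det := by
  rw [← RingHom.mapMatrix_apply, ← RingHom.map_det]
  exact hP.map φ

lemma map_mul_mul_eq_diagonal {P L Q : Matrix n n R} (hD : (P * L * Q).IsDiag) :
    P.map φ * L.map φ * Q.map φ = diagonal fun i => φ ((P * L * Q) i i) := by
  rw [← Matrix.map_mul, ← Matrix.map_mul, ← hD.diagonal_diag, diagonal_map (map_zero φ),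
    hD.diagonal_diag]
  rfl

lemma map_mul_map_sub_smul_one {L : Matrix n n R} {t u m : R}
    (h : (L - t • 1) * (L - u • 1) = m • vecMulVec 1 1) (ht : φ t = 0) :
    L.map φ * (L.map φ - φ u • 1) = vecMulVec (φ m • 1) 1 := by
  have hsmul (a : R) (M : Matrix n n R) : (a • M).map φ = φ a • M.map φ :=
    Matrix.map_smul' φ a M (map_mul φ)
  have hone : (1 : Matrix n n R).map φ = 1 := Matrix.map_one φ (map_zero φ) (map_one φ)
  have := congrArg (·.map φ) h
  simp only [Matrix.map_mul, Matrix.map_sub _ (map_sub φ), hsmul, hone, ht, zero_smul,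
    sub_zero] at this
  rw [this]
  ext i j
  simp

end Map

section QuadraticIdentity

variable {n R : Type*} [Fintype n] [DecidableEq n] [CommRing R] {L : Matrix n n R}

lemma mul_eq_mul_of_mulVec_eq_zero [IsDomain R] (h : L.charpoly.rootMultiplicity 0 ≤ 1)
    {x y : n → R} (hx : L *ᵥ x = 0) (hy : L *ᵥ y = 0) (i j : n) : x i * y j = x j * y i := by
  set φ := algebraMap R (FractionRing R)
  have hφ : Function.Injective φ := IsFractionRing.injective R (FractionRing R)
  set E := End.eigenspace (L.map φ).toLin' 0
  have hE : finrank (FractionRing R) E ≤ 1 := by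
    calc finrank (FractionRing R) E ≤ (L.map φ).toLin'.charpoly.rootMultiplicity 0 :=
          LinearMap.finrank_eigenspace_le _ _
      _ = L.charpoly.rootMultiplicity 0 := by
          rw [charpoly_toLin', charpoly_map, ← map_zero φ, ← eq_rootMultiplicity_map hφ]
      _ ≤ 1 := h
  have mem_E {z : n → R} (hz : L *ᵥ z = 0) : φ ∘ z ∈ E := by
    simpa [E, End.mem_eigenspace_iff] using map_mulVec_comp_eq_zero φ hz
  obtain ⟨w, hw⟩ := finrank_le_one_iff.1 hE
  obtain ⟨a, ha⟩ := hw ⟨_, mem_E hx⟩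
  obtain ⟨b, hb⟩ := hw ⟨_, mem_E hy⟩
  have hxa (k : n) : φ (x k) = a * w.1 k := (congrFun (congrArg Subtype.val ha) k).symm
  have hyb (k : n) : φ (y k) = b * w.1 k := (congrFun (congrArg Subtype.val hb) k).symm
  apply hφ
  rw [map_mul, map_mul, hxa, hxa, hyb, hyb]
  ring

lemma exists_eq_smul_vecMulVec_one [IsDomain R] {B : Matrix n n R} (hL1 : L *ᵥ 1 = 0)
    (h : L.charpoly.rootMultiplicity 0 ≤ 1) (hB : B.IsSymm) (hLB : L * B = 0) :
    ∃ m : R, B = m • vecMulVec 1 1 := by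
  rcases isEmpty_or_nonempty n with _ | ⟨⟨x₀⟩⟩
  · exact ⟨0, Subsingleton.elim _ _⟩
  have hcol (x x' y : n) : B x y = B x' y := by
    have hy : L *ᵥ B.col y = 0 := congrFun (congrArg Matrix.col hLB) y
    simpa using mul_eq_mul_of_mulVec_eq_zero h hy hL1 x x'
  refine ⟨B x₀ x₀, ?_⟩
  ext x y
  rw [hcol x x₀, hB.apply, hcol y x₀]
  simp

lemma exists_sub_mul_sub_eq_smul [LinearOrder R] [IsStrictOrderedRing R] (hL : L.IsSymm)
    (hL1 : L *ᵥ 1 = 0) {t u : R} (ht : t ≠ 0) (hu : u ≠ 0) {f g : ℕ}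
    (hchar : L.charpoly = X * (X - C t) ^ f * (X - C u) ^ g) :
    ∃ m : R, (L - t • 1) * (L - u • 1) = m • vecMulVec 1 1 := by
  have haeval : aeval L ((X - C t) * (X - C u)) = (L - t • 1) * (L - u • 1) := by
    simp only [map_mul, map_sub, aeval_X, aeval_C, Algebra.algebraMap_eq_smul_one]
  have hdvd : L.charpoly ∣ (X * ((X - C t) * (X - C u))) ^ (1 + f + g) := by
    rw [hchar, mul_pow, mul_pow, mul_assoc]
    exact mul_dvd_mul (dvd_pow_self _ (by omega))
      (mul_dvd_mul (pow_dvd_pow _ (by omega)) (pow_dvd_pow _ (by omega)))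
  have hann : L * ((L - t • 1) * (L - u • 1)) = 0 := by
    rw [← haeval]
    simpa only [map_mul, aeval_X] using aeval_eq_zero_of_charpoly_dvd_pow hL hdvd
  have hmult : L.charpoly.rootMultiplicity 0 = 1 := by
    rw [hchar, mul_assoc, ← pow_one (X : R[X])]
    exact rootMultiplicity_zero_X_pow_mul (by simp [ht, hu]) 1
  exact exists_eq_smul_vecMulVec_one hL1 hmult.le (haeval ▸ isSymm_aeval hL _) hann

variable [Nonempty n] {t u m : R}

lemma card_mul_eq_mul (hL1 : L *ᵥ 1 = 0) (h : (L - t • 1) * (L - u • 1) = m • vecMulVec 1 1) :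
    Fintype.card n * m = t * u := by
  obtain ⟨x⟩ := ‹Nonempty n›
  have hsub (a : R) : (L - a • 1) *ᵥ (1 : n → R) = -a • 1 := by
    rw [sub_mulVec, smul_mulVec, one_mulVec, hL1, zero_sub, neg_smul]
  have hmul : (t * u) • (1 : n → R) = (m * Fintype.card n) • 1 := by
    calc (t * u) • (1 : n → R) = ((L - t • 1) * (L - u • 1)) *ᵥ 1 := by
          rw [← mulVec_mulVec, hsub, mulVec_smul, hsub, smul_smul, neg_mul_neg, mul_comm]
      _ = (m * Fintype.card n) • 1 := by
          rw [h, smul_mulVec, vecMulVec_mulVec]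
          ext
          simp
  simpa [mul_comm] using (congrFun hmul x).symm

lemma not_dvd_of_not_pow_succ_dvd_mul (hL1 : L *ᵥ 1 = 0)
    (h : (L - t • 1) * (L - u • 1) = m • vecMulVec 1 1) {p : R} {c : ℕ}
    (hn : p ^ c ∣ Fintype.card n) (htu : ¬ p ^ (c + 1) ∣ t * u) : ¬ p ∣ m := fun hm =>
  htu (card_mul_eq_mul hL1 h ▸ pow_succ p c ▸ mul_dvd_mul hn hm)

end QuadraticIdentity

section Rank

variable {K M : Type*} [Field K] [AddCommGroup M] [Module K M]
  {φ : End K M} {u : K} {a : M} {b : M →ₗ[K] K}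

lemma map_maxGenEigenspace_zero_eq_span_singleton (h : ∀ x, φ (φ x) - u • φ x = b x • a)
    (ha : φ a = 0) (hb0 : b ≠ 0) (hu : u ≠ 0) : (φ.maxGenEigenspace 0).map φ = K ∙ a := by
  apply le_antisymm
  · rintro _ ⟨x, hx, rfl⟩
    obtain ⟨k, hk⟩ : ∃ k : ℕ, (φ ^ k) x = 0 := by simpa [End.mem_maxGenEigenspace] using hx
    clear hx
    induction k generalizing x with
    | zero => simp_all
    | succ k ih =>
      have hφφ : φ (φ x) ∈ K ∙ a := ih (φ x) (by rwa [← End.mul_apply, ← pow_succ])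
      have hux : u • φ x = φ (φ x) - b x • a := by rw [← h]; abel
      rw [← Submodule.smul_mem_iff _ hu, hux]
      exact sub_mem hφφ (Submodule.smul_mem _ _ (Submodule.mem_span_singleton_self a))
  · obtain ⟨y, hy⟩ : ∃ y, b y = 1 := LinearMap.surjective hb0 1
    have hφ : φ (φ y - u • y) = a := by rw [map_sub, map_smul, h, hy, one_smul]
    have hφ2 : φ (φ (φ y - u • y)) = 0 := by rw [hφ, ha]
    rw [Submodule.span_singleton_le_iff_mem]
    refine ⟨φ y - u • y, End.mem_maxGenEigenspace .. |>.2 ⟨2, ?_⟩, hφ⟩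
    rwa [zero_smul, sub_zero, pow_two, End.mul_apply]

lemma finrank_maxGenEigenspace_zero_eq_finrank_ker_add_one [Module.Finite K M]
    (h : ∀ x, φ (φ x) - u • φ x = b x • a) (ha : φ a = 0) (ha0 : a ≠ 0) (hb0 : b ≠ 0)
    (hu : u ≠ 0) : finrank K (φ.maxGenEigenspace 0) = finrank K (LinearMap.ker φ) + 1 := by
  set E := φ.maxGenEigenspace 0
  have ker_le : LinearMap.ker φ ≤ E := fun x hx =>
    (End.mem_maxGenEigenspace ..).2 ⟨1, by simpa using hx⟩
  have rank_nullity := LinearMap.finrank_range_add_finrank_ker (φ.domRestrict E)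
  rw [LinearMap.range_domRestrict, map_maxGenEigenspace_zero_eq_span_singleton h ha hb0 hu,
    finrank_span_singleton ha0, LinearMap.ker_domRestrict,
    (Submodule.comapSubtypeEquivOfLe ker_le).finrank_eq] at rank_nullity
  rw [← rank_nullity, add_comm]

variable {n : Type*} [Fintype n] [DecidableEq n]

lemma rank_add_rootMultiplicity_charpoly {L : Matrix n n K} {u : K} {a b : n → K}
    (h : L * (L - u • 1) = vecMulVec a b) (ha : L *ᵥ a = 0) (ha0 : a ≠ 0) (hb0 : b ≠ 0)
    (hu : u ≠ 0) : L.rank + L.charpoly.rootMultiplicity 0 = Fintype.card n + 1 := by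
  have hφ (x : n → K) : L.toLin' (L.toLin' x) - u • L.toLin' x
      = dotProductEquiv K n b x • a := by
    have := congrArg (· *ᵥ x) h
    simpa [mul_sub, sub_mulVec, vecMulVec_mulVec, smul_mulVec] using this
  have hb : dotProductEquiv K n b ≠ 0 := (dotProductEquiv K n).map_ne_zero_iff.2 hb0
  have := finrank_maxGenEigenspace_zero_eq_finrank_ker_add_one hφ (by simpa using ha) ha0 hb hu
  have rank_nullity := LinearMap.finrank_range_add_finrank_ker L.toLin'
  rw [← charpoly_toLin', ← LinearMap.finrank_maxGenEigenspace_eq, this, Matrix.rank,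
    ← toLin'_apply', ← add_assoc, rank_nullity, finrank_fintype_fun_eq_card]

lemma card_diagonal_eq_zero_add_one {L P Q : Matrix n n K} {u : K} {a b d : n → K}
    (hP : IsUnit P.det) (hQ : IsUnit Q.det) (hD : P * L * Q = diagonal d)
    (h : L * (L - u • 1) = vecMulVec a b) (ha : L *ᵥ a = 0) (ha0 : a ≠ 0) (hb0 : b ≠ 0)
    (hu : u ≠ 0) : Nat.card {i // d i = 0} + 1 = L.charpoly.rootMultiplicity 0 := by
  classical
  have hrank : L.rank = Fintype.card {i // d i ≠ 0} := by
    rw [← rank_diagonal, ← hD, rank_mul_eq_left_of_isUnit_det _ _ hQ,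
      rank_mul_eq_right_of_isUnit_det _ _ hP]
  have hcompl : Fintype.card {i // d i ≠ 0} = Fintype.card n - Fintype.card {i // d i = 0} :=
    Fintype.card_subtype_compl _
  have hle := Fintype.card_subtype_le (fun i => d i = 0)
  have := rank_add_rootMultiplicity_charpoly h ha ha0 hb0 hu
  rw [Nat.card_eq_fintype_card]
  omega

end Rank

section DiagonalForm

variable {n R : Type*} [Fintype n] [DecidableEq n] [CommRing R] {P L Q : Matrix n n R}
  {d : n → R}

lemma exists_mul_mul_eq_smul {u : R} {a b : n → R} (h : L * (L - u • 1) = vecMulVec a b)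
    (i j : n) : ∃ Y, L * Y * L = (b j * a i * u) • L := by
  set W := L - u • 1 with hW
  have hcomm : W * L = L * W := by simp [hW, sub_mul, mul_sub]
  have hE : vecMulVec a b * single j i 1 * vecMulVec a b = (b j * a i) • vecMulVec a b := by
    rw [vecMulVec_mul, vecMulVec_mul_vecMulVec, ← dotProduct_mulVec, single_mulVec_eq]
    simp [mul_comm]
  refine ⟨(b j * a i) • 1 - W * single j i 1 * W, ?_⟩
  calc L * ((b j * a i) • 1 - W * single j i 1 * W) * L
      = (b j * a i) • (L * L) - (L * W) * single j i 1 * (W * L) := by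
        simp only [mul_sub, sub_mul, mul_smul_comm, smul_mul_assoc, mul_one, mul_assoc]
    _ = (b j * a i) • (L * L - L * W) := by rw [hcomm, h, hE, smul_sub]
    _ = (b j * a i * u) • L := by simp [hW, mul_sub, smul_smul]

lemma eq_zero_of_isNilpotent_of_mul_mul_eq_smul (hP : IsUnit P.det) (hQ : IsUnit Q.det)
    (hD : P * L * Q = diagonal d) {Y : Matrix n n R} {ε : R} (hε : IsUnit ε)
    (hY : L * Y * L = ε • L) {i : n} (hi : IsNilpotent (d i)) : d i = 0 := by
  set Z := Q⁻¹ * Y * P⁻¹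
  have hDZD : diagonal d * Z * diagonal d = ε • diagonal d := by
    calc diagonal d * Z * diagonal d
        = P * (L * (Q * Q⁻¹) * Y * (P⁻¹ * P) * L) * Q := by rw [← hD]; simp only [Z, mul_assoc]
      _ = ε • diagonal d := by
        rw [mul_nonsing_inv Q hQ, nonsing_inv_mul P hP, mul_one, mul_one, hY, mul_smul_comm,
          smul_mul_assoc, hD]
  have hdi : (ε - d i * Z i i) * d i = 0 := by
    have := congrFun (congrFun hDZD i) i
    simp only [mul_diagonal, diagonal_mul, Matrix.smul_apply, diagonal_apply_eq,
      smul_eq_mul] at this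
    rw [sub_mul, this, sub_self]
  have hunit : IsUnit (ε - d i * Z i i) := by
    rw [sub_eq_add_neg]
    exact ((Commute.all _ _).isNilpotent_mul_right hi).neg.isUnit_add_left_of_commute hε
      (Commute.all _ _)
  exact hunit.mul_right_eq_zero.1 hdi

lemma eq_of_pow_dvd_of_mul_eq_vecMulVec_sub [IsDomain R] (hP : IsUnit P.det) (hQ : IsUnit Q.det)
    (hD : P * L * Q = diagonal d) {W : Matrix n n R} {a b : n → R} {τ p : R} {k : ℕ}
    (hLW : L * W = vecMulVec a b - τ • 1) (hp : Prime p) (hτ : ¬ p ^ k ∣ τ) {i j : n}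
    (hi : p ^ k ∣ d i) (hj : p ^ k ∣ d j) : i = j := by
  by_contra hij
  set α := P *ᵥ a
  set β := b ᵥ* P⁻¹
  have hDZ : diagonal d * (Q⁻¹ * W * P⁻¹) = vecMulVec α β - τ • 1 := by
    calc diagonal d * (Q⁻¹ * W * P⁻¹) = P * (L * (Q * Q⁻¹) * W) * P⁻¹ := by
          rw [← hD]; simp only [mul_assoc]
      _ = vecMulVec α β - τ • 1 := by
        rw [mul_nonsing_inv Q hQ, mul_one, hLW, mul_sub, sub_mul, mul_vecMulVec, vecMulVec_mul,
          mul_smul_comm, smul_mul_assoc, mul_one, mul_nonsing_inv P hP]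
  have hdvd {x : n} (hx : p ^ k ∣ d x) (y : n) :
      p ^ k ∣ α x * β y - τ * (1 : Matrix n n R) x y := by
    have := congrFun (congrFun hDZ x) y
    rw [diagonal_mul] at this
    exact (hx.mul_right _).trans this.dvd
  have hdiag {x : n} (hx : p ^ k ∣ d x) : ¬ p ^ k ∣ α x * β x := fun h =>
    hτ (by simpa using (dvd_sub_right h).1 (hdvd hx x))
  have hoff {x y : n} (hx : p ^ k ∣ d x) (hxy : x ≠ y) : p ^ k ∣ α x * β y := by
    simpa [hxy] using hdvd hx y
  -- The `2 × 2` minors of a rank one matrix vanish: this is also the off-diagonal product.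
  have hprod : p ^ (k + k) ∣ (α i * β i) * (α j * β j) := by
    have := mul_dvd_mul (hoff hi hij) (hoff hj (Ne.symm hij))
    rw [← pow_add] at this
    convert this using 1
    ring
  have hfin {x : n} (hx : p ^ k ∣ d x) := emultiplicity_lt_iff_not_dvd.2 (hdiag hx)
  rw [pow_dvd_iff_le_emultiplicity, emultiplicity_mul hp, Nat.cast_add] at hprod
  exact absurd hprod (not_le.2 (ENat.add_lt_add (hfin hi) (hfin hj)))

lemma exists_diagonal_eq_zero [IsDomain R] [Nonempty n] (hL1 : L *ᵥ 1 = 0)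
    (hD : P * L * Q = diagonal d) : ∃ i, d i = 0 := by
  have hdet : L.det = 0 := exists_mulVec_eq_zero_iff.1 ⟨1, one_ne_zero, hL1⟩
  have hprod : ∏ i, d i = 0 := by
    rw [← det_diagonal, ← hD, det_mul, det_mul, hdet, mul_zero, zero_mul]
  simpa only [Finset.mem_univ, true_and] using Finset.prod_eq_zero_iff.1 hprod

end DiagonalForm

section DiagonalEntries

variable {n R : Type*} [Fintype n] [DecidableEq n] [CommRing R] {P L Q : Matrix n n R}
  {t u m : R}

lemma card_map_diagonal_eq_zero [Nonempty n] {K : Type*} [Field K] (φ : R →+* K)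
    (hP : IsUnit P.det) (hQ : IsUnit Q.det) (hD : (P * L * Q).IsDiag) (hL1 : L *ᵥ 1 = 0)
    {f g : ℕ} (hchar : L.charpoly = X * (X - C t) ^ f * (X - C u) ^ g)
    (h : (L - t • 1) * (L - u • 1) = m • vecMulVec 1 1) (ht : φ t = 0) (hu : φ u ≠ 0)
    (hm : φ m ≠ 0) : Nat.card {i // φ ((P * L * Q) i i) = 0} = f := by
  have hker : L.map φ *ᵥ (φ m • 1) = 0 := by
    have hone : φ ∘ (1 : n → R) = 1 := funext fun _ => map_one φ
    rw [mulVec_smul, ← hone, map_mulVec_comp_eq_zero φ hL1, smul_zero]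
  have hcharφ : (L.map φ).charpoly = X ^ (f + 1) * (X - C (φ u)) ^ g := by
    rw [charpoly_map, hchar]
    simp only [Polynomial.map_mul, Polynomial.map_pow, Polynomial.map_sub, map_X, map_C, ht,
      map_zero, sub_zero, pow_succ']
  have hmult : (L.map φ).charpoly.rootMultiplicity 0 = f + 1 := by
    rw [hcharφ]
    exact rootMultiplicity_zero_X_pow_mul (by simp [hu]) _
  have hcard := card_diagonal_eq_zero_add_one (isUnit_det_map φ hP) (isUnit_det_map φ hQ)
    (map_mul_mul_eq_diagonal φ hD) (map_mul_map_sub_smul_one φ h ht) hker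
    (smul_ne_zero hm one_ne_zero) one_ne_zero hu
  exact Nat.succ_injective (hcard.trans hmult)

lemma pow_dvd_diagonal_of_dvd (hP : IsUnit P.det) (hQ : IsUnit Q.det) (hD : (P * L * Q).IsDiag)
    (h : (L - t • 1) * (L - u • 1) = m • vecMulVec 1 1) {p : R} {c : ℕ} (ht : p ^ c ∣ t)
    (hu : IsCoprime u p) (hm : IsCoprime m p) {i : n} (hi : p ∣ (P * L * Q) i i) :
    p ^ c ∣ (P * L * Q) i i := by
  set φ := Ideal.Quotient.mk (Ideal.span {p ^ c})
  have hφ (x : R) : φ x = 0 ↔ p ^ c ∣ x := Ideal.Quotient.eq_zero_iff_dvd _ _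
  have hunit {x : R} (hx : IsCoprime x p) : IsUnit (φ x) := by
    have hxp := (hx.pow_right (n := c)).map φ
    rwa [(hφ _).2 dvd_rfl, isCoprime_zero_right] at hxp
  obtain ⟨Y, hY⟩ := exists_mul_mul_eq_smul (map_mul_map_sub_smul_one φ h ((hφ t).2 ht)) i i
  have hnil : IsNilpotent (φ ((P * L * Q) i i)) :=
    ⟨c, by rw [← map_pow, hφ]; exact pow_dvd_pow_of_dvd hi c⟩
  refine (hφ _).1 (eq_zero_of_isNilpotent_of_mul_mul_eq_smul (isUnit_det_map φ hP)
    (isUnit_det_map φ hQ) (map_mul_mul_eq_diagonal φ hD) ?_ hY hnil)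
  simpa using (hunit hm).mul (hunit hu)

lemma eq_of_pow_dvd_diagonal [IsDomain R] (hP : IsUnit P.det) (hQ : IsUnit Q.det)
    (hD : (P * L * Q).IsDiag) (h : (L - t • 1) * (L - u • 1) = m • vecMulVec 1 1) {p : R} {k : ℕ}
    (hp : Prime p) (htu : ¬ p ^ k ∣ t * u) {i j : n} (hi : p ^ k ∣ (P * L * Q) i i)
    (hj : p ^ k ∣ (P * L * Q) j j) : i = j := by
  have hLW : L * (L - (t + u) • 1) = vecMulVec (m • 1) 1 - (t * u) • 1 := by
    rw [smul_vecMulVec, ← h]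
    simp only [mul_sub, sub_mul, add_smul, mul_smul_comm, smul_mul_assoc, mul_one, one_mul,
      smul_sub, smul_smul, mul_add, mul_comm u t]
    abel
  exact eq_of_pow_dvd_of_mul_eq_vecMulVec_sub hP hQ hD.diagonal_diag.symm hLW hp htu hi hj

end DiagonalEntries

section Count

variable {V : Type*} {p : ℕ} {D : Matrix V V ℤ} {c : ℕ} {x : V}

lemma elemDivCountSq_zero_add_card_dvd [Finite V] (p : ℕ) (D : Matrix V V ℤ) :
    elemDivCountSq p D 0 + Nat.card {i // (p : ℤ) ∣ D i i} = Nat.card V := by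
  have hset : {i | D i i ≠ 0 ∧ (p : ℤ) ^ 0 ∣ D i i ∧ ¬ (p : ℤ) ^ (0 + 1) ∣ D i i}
      = {i | (p : ℤ) ∣ D i i}ᶜ := by
    ext i
    simp only [pow_zero, one_dvd, zero_add, pow_one, true_and, Set.mem_ofPred_eq,
      Set.mem_compl_iff, and_iff_right_iff_imp]
    exact fun h h0 => h (h0 ▸ dvd_zero _)
  rw [← Set.ncard_add_ncard_compl {i | (p : ℤ) ∣ D i i}, add_comm, ← hset]
  rfl

lemma elemDivCountSq_add_one [Finite V] (hpow : ∀ i, (p : ℤ) ∣ D i i → (p : ℤ) ^ c ∣ D i i)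
    (huniq : ∀ i, (p : ℤ) ^ (c + 1) ∣ D i i → i = x) (hx : D x x = 0) (hc : c ≠ 0) :
    elemDivCountSq p D c + 1 = Nat.card {i // (p : ℤ) ∣ D i i} := by
  have hset : {i | D i i ≠ 0 ∧ (p : ℤ) ^ c ∣ D i i ∧ ¬ (p : ℤ) ^ (c + 1) ∣ D i i}
      = {i | (p : ℤ) ∣ D i i} \ {x} := by
    ext i
    constructor
    · rintro ⟨hi, hci, -⟩
      exact ⟨(dvd_pow_self _ hc).trans hci, fun hix => hi (hix ▸ hx)⟩
    · rintro ⟨hi, hix⟩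
      have hci := mt (huniq i) hix
      exact ⟨fun h0 => hci (h0 ▸ dvd_zero _), hpow i hi, hci⟩
  have hmem : (p : ℤ) ∣ D x x := hx ▸ dvd_zero _
  calc elemDivCountSq p D c + 1 = ({i | (p : ℤ) ∣ D i i} \ {x}).ncard + 1 :=
        congrArg (·.ncard + 1) hset
    _ = _ := Set.ncard_sdiff_singleton_add_one hmem

lemma elemDivCountSq_eq_zero (hpow : ∀ i, (p : ℤ) ∣ D i i → (p : ℤ) ^ c ∣ D i i)
    (huniq : ∀ i, (p : ℤ) ^ (c + 1) ∣ D i i → i = x) (hx : D x x = 0) {j : ℕ} (hj : j ≠ 0)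
    (hjc : j ≠ c) : elemDivCountSq p D j = 0 := by
  rw [elemDivCountSq, Nat.card_eq_zero]
  refine Or.inl ⟨?_⟩
  rintro ⟨i, hi, hji, hji'⟩
  rcases lt_or_gt_of_ne hjc with hlt | hgt
  · exact hji' ((pow_dvd_pow _ hlt).trans (hpow i ((dvd_pow_self _ hj).trans hji)))
  · exact hi (huniq i ((pow_dvd_pow _ hgt).trans hji) ▸ hx)

lemma elemDivCountSq_of_card_dvd [Finite V] (hpow : ∀ i, (p : ℤ) ∣ D i i → (p : ℤ) ^ c ∣ D i i)
    (huniq : ∀ i, (p : ℤ) ^ (c + 1) ∣ D i i → i = x) (hx : D x x = 0) (hc : c ≠ 0) {f g : ℕ}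
    (hf : Nat.card {i // (p : ℤ) ∣ D i i} = f) (hV : Nat.card V = 1 + f + g) :
    elemDivCountSq p D 0 = g + 1 ∧ elemDivCountSq p D c = f - 1 ∧
      ∀ j, j ≠ 0 → j ≠ c → elemDivCountSq p D j = 0 := by
  have hzero := elemDivCountSq_zero_add_card_dvd p D
  have hcount := elemDivCountSq_add_one hpow huniq hx hc
  exact ⟨by omega, by omega, fun j => elemDivCountSq_eq_zero hpow huniq hx⟩

end Count

lemma pow_dvd_of_padicValInt_eq {p : ℕ} [Fact p.Prime] {t u : ℤ} {c : ℕ}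
    (ht : padicValInt p t = c) (hc : 0 < c) (hu : ¬ (p : ℤ) ∣ u) :
    (p : ℤ) ^ c ∣ t ∧ ¬ (p : ℤ) ^ (c + 1) ∣ t * u := by
  refine ⟨(padicValInt_dvd_iff c t).2 (Or.inr ht.ge), fun h => ?_⟩
  have hp : Prime (p : ℤ) := Nat.prime_iff_prime_int.1 Fact.out
  rcases (padicValInt_dvd_iff _ t).1 (hp.pow_dvd_of_dvd_mul_right _ hu h) with rfl | hlt
  · simp only [padicValInt.zero] at ht
    omega
  · omega

theorem stmt18_general {V : Type*} [Fintype V] [DecidableEq V] (L : Matrix V V ℤ) (hL : L.IsSymm)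
    (hL1 : L *ᵥ 1 = 0) (t u : ℤ) (f g : ℕ)
    (hchar : L.charpoly = X * (X - C t) ^ f * (X - C u) ^ g)
    (ℓ c : ℕ) (hℓ : ℓ.Prime) (hu : ¬ (ℓ : ℤ) ∣ u) (ht : padicValInt ℓ t = c)
    (hV : padicValNat ℓ (Fintype.card V) = c) (hc : 0 < c)
    (P Q : Matrix V V ℤ) (hP : IsUnit P.det) (hQ : IsUnit Q.det) (hD : (P * L * Q).IsDiag) :
    elemDivCountSq ℓ (P * L * Q) 0 = g + 1 ∧ elemDivCountSq ℓ (P * L * Q) c = f - 1 ∧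
      ∀ j, j ≠ 0 → j ≠ c → elemDivCountSq ℓ (P * L * Q) j = 0 := by
  have : Fact ℓ.Prime := ⟨hℓ⟩
  have hp : Prime (ℓ : ℤ) := Nat.prime_iff_prime_int.1 hℓ
  have hcop {a : ℤ} (ha : ¬ (ℓ : ℤ) ∣ a) : IsCoprime a ℓ := (hp.coprime_iff_not_dvd.2 ha).symm
  have hφ (a : ℤ) : Int.castRingHom (ZMod ℓ) a = 0 ↔ (ℓ : ℤ) ∣ a :=
    ZMod.intCast_zmod_eq_zero_iff_dvd a ℓ
  have : Nonempty V := not_isEmpty_iff.1 fun _ => by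
    rw [Fintype.card_eq_zero, padicValNat_zero_right] at hV
    omega
  have hcV : (ℓ : ℤ) ^ c ∣ (Fintype.card V : ℤ) := by exact_mod_cast hV ▸ pow_padicValNat_dvd
  obtain ⟨hct, htu⟩ := pow_dvd_of_padicValInt_eq ht hc hu
  have htu0 : t * u ≠ 0 := fun h0 => htu (h0 ▸ dvd_zero _)
  obtain ⟨m, h⟩ := exists_sub_mul_sub_eq_smul hL hL1 (left_ne_zero_of_mul htu0)
    (right_ne_zero_of_mul htu0) hchar
  have hm : ¬ (ℓ : ℤ) ∣ m := not_dvd_of_not_pow_succ_dvd_mul hL1 h hcV htu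
  have hcard : Nat.card {i // (ℓ : ℤ) ∣ (P * L * Q) i i} = f := by
    have hℓt : (ℓ : ℤ) ∣ t := (dvd_pow_self _ hc.ne').trans hct
    simpa only [hφ] using card_map_diagonal_eq_zero _ hP hQ hD hL1 hchar h ((hφ t).2 hℓt)
      ((hφ u).not.2 hu) ((hφ m).not.2 hm)
  have hpow (i : V) := pow_dvd_diagonal_of_dvd hP hQ hD h hct (hcop hu) (hcop hm) (i := i)
  obtain ⟨x, hx⟩ := exists_diagonal_eq_zero hL1 hD.diagonal_diag.symm
  rw [diag_apply] at hx
  have huniq (i : V) (hi : (ℓ : ℤ) ^ (c + 1) ∣ (P * L * Q) i i) : i = x :=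
    eq_of_pow_dvd_diagonal hP hQ hD h hp htu hi (hx ▸ dvd_zero _)
  have hcardV : Nat.card V = 1 + f + g := by
    rw [Nat.card_eq_fintype_card]
    exact card_eq_of_charpoly_eq (a := 0) (b := t) (c := u) (by rwa [map_zero, sub_zero])
  exact elemDivCountSq_of_card_dvd hpow huniq hx hc.ne' hcard hcardV

lemma smul_one_sub_adjMatrix_mulVec_one {V : Type*} [Fintype V] [DecidableEq V]
    {G : SimpleGraph V} [DecidableRel G.Adj] {k : ℕ} (h : G.IsRegularOfDegree k) :
    ((k : ℤ) • (1 : Matrix V V ℤ) - G.adjMatrix ℤ) *ᵥ 1 = 0 := by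
  ext i
  simp [sub_mulVec, SimpleGraph.adjMatrix_mulVec_apply, h i]

theorem stmt18 {V : Type*} [Fintype V] [DecidableEq V] (G : SimpleGraph V) [DecidableRel G.Adj]
    (v k lam mu : ℕ) (h : G.IsSRGWith v k lam mu) (hconn : G.Connected) (hmu : 0 < mu)
    (r s : ℤ) (f g : ℕ)
    (hchar : (G.adjMatrix ℤ).charpoly
      = (X - C (k : ℤ)) * (X - C r) ^ f * (X - C s) ^ g)
    (ℓ a c : ℕ) (hℓ : ℓ.Prime)
    (hlt : (ℓ : ℤ) ∣ ((k : ℤ) - r)) (hlu : ¬ (ℓ : ℤ) ∣ ((k : ℤ) - s))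
    (ha : a = padicValInt ℓ (mu : ℤ)) (ha0 : a = 0)
    (hvt : padicValInt ℓ ((k : ℤ) - r) = a + c)
    (hvv : padicValNat ℓ v = c) (hc : 0 < c)
    (P Q : Matrix V V ℤ) (hP : IsUnit P.det) (hQ : IsUnit Q.det)
    (hdiag : ∀ i j, i ≠ j → (P * ((k : ℤ) • (1 : Matrix V V ℤ) - G.adjMatrix ℤ) * Q) i j = 0) :
    elemDivCountSq ℓ (P * ((k : ℤ) • (1 : Matrix V V ℤ) - G.adjMatrix ℤ) * Q) 0 = g + 1
    ∧ elemDivCountSq ℓ (P * ((k : ℤ) • (1 : Matrix V V ℤ) - G.adjMatrix ℤ) * Q) c = f - 1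
    ∧ ∀ j : ℕ, j ≠ 0 → j ≠ c →
        elemDivCountSq ℓ (P * ((k : ℤ) • (1 : Matrix V V ℤ) - G.adjMatrix ℤ) * Q) j = 0 :=
  stmt18_general _ ((isSymm_one.smul _).sub G.isSymm_adjMatrix)
    (smul_one_sub_adjMatrix_mulVec_one h.regular) (k - r) (k - s) f g
    (charpoly_smul_one_sub_of_charpoly_eq hchar) ℓ c hℓ hlu (by rw [hvt, ha0, zero_add])
    (h.card ▸ hvv) hc P Q hP hQ hdiag
end

section
/- Let ℓ be a prime, n ≥ 1, and X an n×n matrix over ℤ_ℓ whose reduction mod ℓ is NOT nilpotent, such that X has exactly three distinct eigenvalues α, β, γ ∈ ℤ_ℓ (with (X − αI)(X − βI)(X − γI) = 0) and ℓ divides exactly one of them, say ℓ ∣ γ, v_ℓ(γ) = d, with γ having geometric multiplicity c as eigenvalue of X over ℚ_ℓ. Suppose further the minimal polynomial of the reduction \bar{X} divides z(z − \bar{α})(z − \bar{β}) with \bar{α}, \bar{β} ≠ 0 distinct. Then the ℓ-elementary divisors of X are ℓ^0 with multiplicity n − c and ℓ^d with multiplicity c. -/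
open Matrix Polynomial

/-- The multiplicity of `p^a` among the elementary divisors of a square matrix over `ℤ_[p]`,
read off from a diagonal form `D`: the number of nonzero diagonal entries of
valuation exactly `a`. -/
noncomputable def eCount (p : ℕ) [Fact p.Prime] {n : ℕ}
    (D : Matrix (Fin n) (Fin n) ℤ_[p]) (a : ℕ) : ℕ :=
  Nat.card {i : Fin n // D i i ≠ 0 ∧ (p : ℤ_[p]) ^ a ∣ D i i ∧ ¬ (p : ℤ_[p]) ^ (a + 1) ∣ D i i}

/-!
Write `(X - γ) f(X) = 0` with `f = (T - α)(T - β)`. Since `f(γ)` is a unit, rescaling `f` to have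
`f(γ) = 1` makes `E = f(X)` an idempotent that projects onto the `γ`-eigenspace of `X`, and since
`f(0)` is a unit, `X` is invertible on the kernel of `E`. So `X` is `γ` on one summand and
invertible on the other: in a diagonal form each entry is a unit or an associate of `γ`. Modulo the
maximal ideal the non-units count the dimension of the kernel of `X`, that is, the rank of `E`. An
idempotent over a local ring has the same rank over every field, so this is also the dimension `c`
of the `γ`-eigenspace over `ℚ_ℓ`.
-/

section Idempotent

variable {R A : Type*} [CommRing R] [Ring A] [Algebra R A] {x : A} {f : R[X]} {γ : R}

theorem isIdempotentElem_aeval (hx : aeval x ((X - C γ) * f) = 0) (hf : f.eval γ = 1) :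
    IsIdempotentElem (aeval x f) := by
  have h_dvd : (X - C γ) * f ∣ f * f - f := by
    have h : X - C γ ∣ f - 1 := by simpa [hf] using X_sub_C_dvd_sub_C_eval (p := f) (a := γ)
    simpa only [sub_mul, one_mul] using mul_dvd_mul_right h f
  have h_zero : aeval x (f * f - f) = 0 := aeval_eq_zero_of_dvd_aeval_eq_zero h_dvd hx
  rwa [map_sub, map_mul, sub_eq_zero] at h_zero

theorem mul_aeval_eq_smul (hx : aeval x ((X - C γ) * f) = 0) : x * aeval x f = γ • aeval x f := by
  simpa [sub_mul, sub_eq_zero, Algebra.smul_def] using hx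

theorem exists_commute_mul_eq_one_sub_aeval (he : IsIdempotentElem (aeval x f))
    (hf : IsUnit (f.eval 0)) : ∃ y, Commute x y ∧ x * y = 1 - aeval x f := by
  obtain ⟨u, hu⟩ := hf.exists_left_inv
  let y : R[X] := C u * f.divX * (f - 1)
  have hy : X * y = C u * (f * f - f) + (1 - f) := by
    have h_const : C u * C (f.coeff 0) = 1 := by
      rw [← C_mul, coeff_zero_eq_eval_zero, hu, C_1]
    linear_combination C u * (f - 1) * f.divX_mul_X_add + (1 - f) * h_const
  refine ⟨aeval x y, ?_, ?_⟩
  · simpa using (Commute.all X y).map (aeval x)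
  · simpa [he.eq] using congrArg (aeval x) hy

theorem range_aeval_eq_eigenspace {V : Type*} [AddCommGroup V] [Module R V] {φ : Module.End R V}
    (hφ : aeval φ ((X - C γ) * f) = 0) (hf : f.eval γ = 1) :
    LinearMap.range (aeval φ f) = φ.eigenspace γ := by
  ext v
  rw [LinearMap.mem_range, Module.End.mem_eigenspace_iff]
  constructor
  · rintro ⟨w, rfl⟩
    exact LinearMap.congr_fun (mul_aeval_eq_smul hφ) w
  · intro hv
    refine ⟨v, ?_⟩
    rw [Module.End.aeval_apply_of_mem_apply_eq_smul hv, hf, one_smul]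

end Idempotent

section Rank

variable {R ι : Type*} [CommRing R] [Fintype ι]

theorem rank_mul_of_mul_eq_one [StrongRankCondition R] {κ : Type*} [Fintype κ] [DecidableEq κ]
    {A : Matrix ι κ R} {B : Matrix κ ι R} (h : B * A = 1) : (A * B).rank = Fintype.card κ := by
  apply le_antisymm
  · exact (rank_mul_le_left A B).trans (rank_le_card_width A)
  · calc
      Fintype.card κ = (B * (A * B) * A).rank := by
        rw [← Matrix.mul_assoc, h, Matrix.one_mul, h, rank_one]
      _ ≤ (B * (A * B)).rank := rank_mul_le_left _ _
      _ ≤ (A * B).rank := rank_mul_le_right _ _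

theorem rank_map_mul_of_mul_eq_one {S κ : Type*} [CommRing S] [StrongRankCondition S] [Fintype κ]
    [DecidableEq κ] {A : Matrix ι κ R} {B : Matrix κ ι R} (h : B * A = 1) (φ : R →+* S) :
    ((A * B).map φ).rank = Fintype.card κ := by
  have h_map : B.map φ * A.map φ = 1 := by
    rw [← Matrix.map_mul, h, Matrix.map_one φ φ.map_zero φ.map_one]
  rw [Matrix.map_mul, rank_mul_of_mul_eq_one h_map]

theorem exists_mul_eq_one_of_isIdempotentElem [IsLocalRing R] {E : Matrix ι ι R}
    (hE : IsIdempotentElem E) :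
    ∃ (r : ℕ) (A : Matrix ι (Fin r) R) (B : Matrix (Fin r) ι R), A * B = E ∧ B * A = 1 := by
  classical
  let e := toLin' E
  have he : IsIdempotentElem e := hE.map toLinAlgEquiv'
  let N := LinearMap.range e
  have h_retract : e.rangeRestrict ∘ₗ N.subtype = LinearMap.id := by
    ext v : 2
    exact (LinearMap.IsIdempotentElem.mem_range_iff he).1 v.2
  have : Module.Projective R N := Module.Projective.of_split _ _ h_retract
  have : Module.Free R N := Module.free_of_flat_of_isLocalRing
  let b := Module.finBasis R N
  refine ⟨_, LinearMap.toMatrix b (Pi.basisFun R ι) N.subtype,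
    LinearMap.toMatrix (Pi.basisFun R ι) b e.rangeRestrict, ?_, ?_⟩
  · have h_comp : N.subtype ∘ₗ e.rangeRestrict = e := e.subtype_comp_codRestrict _ _
    rw [← LinearMap.toMatrix_comp, h_comp]
    exact LinearMap.toMatrix'_toLin' E
  · rw [← LinearMap.toMatrix_comp, h_retract, LinearMap.toMatrix_id]

theorem rank_map_eq_rank_map_of_isIdempotentElem [IsLocalRing R] {S T : Type*} [CommRing S]
    [StrongRankCondition S] [CommRing T] [StrongRankCondition T] {E : Matrix ι ι R}
    (hE : IsIdempotentElem E) (φ : R →+* S) (ψ : R →+* T) : (E.map φ).rank = (E.map ψ).rank := by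
  obtain ⟨r, A, B, rfl, hBA⟩ := exists_mul_eq_one_of_isIdempotentElem hE
  rw [rank_map_mul_of_mul_eq_one hBA φ, rank_map_mul_of_mul_eq_one hBA ψ]

theorem rank_map_aeval_eq_finrank_eigenspace [DecidableEq ι] (K : Type*) [Field K] [Algebra R K]
    {M : Matrix ι ι R} {f : R[X]} {γ : R} (hM : aeval M ((X - C γ) * f) = 0)
    (hf : f.eval γ = 1) :
    ((aeval M f).map (algebraMap R K)).rank =
      Module.finrank K
        (Module.End.eigenspace (M.map (algebraMap R K)).mulVecLin (algebraMap R K γ)) := by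
  let φ : Matrix ι ι R →ₐ[R] Module.End K (ι → K) :=
    ((toLinAlgEquiv' (R := K) (n := ι)).toAlgHom.restrictScalars R).comp
      (Algebra.ofId R K).mapMatrix
  have h_aeval (g : R[X]) :
      aeval (M.map (algebraMap R K)).mulVecLin (g.map (algebraMap R K)) =
        ((aeval M g).map (algebraMap R K)).mulVecLin := by
    rw [aeval_map_algebraMap]
    exact aeval_algHom_apply φ M g
  have h_zero : aeval (M.map (algebraMap R K)).mulVecLin
      ((X - C (algebraMap R K γ)) * f.map (algebraMap R K)) = 0 := by
    have h := h_aeval ((X - C γ) * f)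
    rwa [hM, Matrix.map_zero _ (map_zero _), mulVecLin_zero, Polynomial.map_mul,
      Polynomial.map_sub, map_X, map_C] at h
  have h_eval : (f.map (algebraMap R K)).eval (algebraMap R K γ) = 1 := by
    rw [eval_map_apply, hf, map_one]
  rw [← range_aeval_eq_eigenspace h_zero h_eval, h_aeval, Matrix.rank]

end Rank

section LocalRing

variable {R : Type*} [CommRing R] [IsLocalRing R]

theorem associated_of_dvd_dvd_of_isLocalRing {a b : R} (hab : a ∣ b) (hba : b ∣ a) :
    Associated a b := by
  obtain ⟨s, rfl⟩ := hab
  obtain ⟨t, ht⟩ := hba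
  by_cases hs : IsUnit s
  · exact (associated_mul_unit_left a s hs).symm
  · have h_unit : IsUnit (1 - s * t) :=
      IsLocalRing.isUnit_one_sub_self_of_mem_nonunits _ fun h => hs (isUnit_of_mul_isUnit_left h)
    have ha : a = 0 := h_unit.mul_left_eq_zero.1 (by linear_combination ht)
    simp [ha]

theorem isUnit_eval_of_isUnit_eval_zero {f : R[X]} {γ : R} (hf : IsUnit (f.eval 0))
    (hγ : ¬ IsUnit γ) : IsUnit (f.eval γ) := by
  have hγ' : IsLocalRing.residue R γ = 0 := (IsLocalRing.residue_eq_zero_iff γ).2 hγ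
  rw [← IsLocalRing.residue_ne_zero_iff_isUnit] at hf ⊢
  rwa [← eval_map_apply, hγ', ← map_zero (IsLocalRing.residue R), eval_map_apply]

variable {ι : Type*} [Fintype ι] [DecidableEq ι]

theorem isUnit_or_associated_of_mul_eq_smul_one {w : ι → R} {γ : R} {A B T : Matrix ι ι R}
    (hA : diagonal w * A = γ • 1) (hB : diagonal w = diagonal w * B * diagonal w + γ • T) (i : ι) :
    IsUnit (w i) ∨ Associated (w i) γ := by
  refine or_iff_not_imp_left.2 fun hw => associated_of_dvd_dvd_of_isLocalRing ?_ ?_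
  · have hAi : w i * A i i = γ := by simpa using congrFun₂ hA i i
    exact ⟨_, hAi.symm⟩
  · have hBi : w i = w i * B i i * w i + γ * T i i := by simpa using congrFun₂ hB i i
    have h_unit : IsUnit (1 - B i i * w i) :=
      IsLocalRing.isUnit_one_sub_self_of_mem_nonunits _ fun h => hw (isUnit_of_mul_isUnit_right h)
    exact h_unit.dvd_mul_right.1 ⟨T i i, by linear_combination hBi⟩

variable {M P Q : Matrix ι ι R} {f : R[X]} {γ : R}

theorem isUnit_or_associated_of_isDiag (hM : aeval M ((X - C γ) * f) = 0)
    (hfγ : f.eval γ = 1) (hf0 : IsUnit (f.eval 0)) (hP : IsUnit P.det) (hQ : IsUnit Q.det)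
    (hD : (P * M * Q).IsDiag) (i : ι) :
    IsUnit ((P * M * Q) i i) ∨ Associated ((P * M * Q) i i) γ := by
  have hE := isIdempotentElem_aeval hM hfγ
  have hME := mul_aeval_eq_smul hM
  obtain ⟨Y, hMY, hMY_eq⟩ := exists_commute_mul_eq_one_sub_aeval hE hf0
  set E := aeval M f
  have h_dvd : M * (γ • Y + E) = γ • 1 := by
    rw [mul_add, mul_smul_comm, hMY_eq, hME, smul_sub, sub_add_cancel]
  have h_regular : M = M * Y * M + γ • E := by
    rw [mul_assoc, ← hMY.eq, hMY_eq, mul_sub, mul_one, hME, sub_add_cancel]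
  have hPP := P.mul_nonsing_inv hP
  apply isUnit_or_associated_of_mul_eq_smul_one (w := (P * M * Q).diag)
    (A := Q⁻¹ * (γ • Y + E) * P⁻¹) (B := Q⁻¹ * Y * P⁻¹) (T := P * E * Q) <;>
    rw [hD.diagonal_diag]
  · calc
      P * M * Q * (Q⁻¹ * (γ • Y + E) * P⁻¹) = P * (M * (γ • Y + E)) * P⁻¹ := by
        simp only [Matrix.mul_assoc, mul_nonsing_inv_cancel_left _ _ hQ]
      _ = γ • 1 := by rw [h_dvd, mul_smul_comm, mul_one, smul_mul_assoc, hPP]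
  · calc
      P * M * Q = P * (M * Y * M + γ • E) * Q := by rw [← h_regular]
      _ = P * M * Q * (Q⁻¹ * Y * P⁻¹) * (P * M * Q) + γ • (P * E * Q) := by
        simp only [Matrix.mul_add, Matrix.add_mul, Matrix.mul_assoc, mul_smul_comm, smul_mul_assoc,
          mul_nonsing_inv_cancel_left _ _ hQ, nonsing_inv_mul_cancel_left _ _ hP]

theorem rank_map_residue_eq_card_isUnit (hP : IsUnit P.det) (hQ : IsUnit Q.det)
    (hD : (P * M * Q).IsDiag) :
    (M.map (IsLocalRing.residue R)).rank = Nat.card {i // IsUnit ((P * M * Q) i i)} := by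
  classical
  let ρ := IsLocalRing.residue R
  have hP' : IsUnit (P.map ρ).det := by simpa [RingHom.map_det] using hP.map ρ
  have hQ' : IsUnit (Q.map ρ).det := by simpa [RingHom.map_det] using hQ.map ρ
  calc
    (M.map ρ).rank = ((P * M * Q).map ρ).rank := by
      rw [Matrix.map_mul, Matrix.map_mul, rank_mul_eq_left_of_isUnit_det _ _ hQ',
        rank_mul_eq_right_of_isUnit_det _ _ hP']
    _ = (diagonal fun i => ρ ((P * M * Q) i i)).rank := by
      rw [← hD.diagonal_diag, diagonal_map ρ.map_zero]
      simp
    _ = Nat.card {i // IsUnit ((P * M * Q) i i)} := by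
      rw [rank_diagonal, ← Nat.card_eq_fintype_card]
      simp only [ρ, IsLocalRing.residue_ne_zero_iff_isUnit]

theorem card_not_isUnit_eq_finrank_eigenspace (K : Type*) [Field K] [Algebra R K]
    (hM : aeval M ((X - C γ) * f) = 0) (hfγ : f.eval γ = 1) (hγ : ¬ IsUnit γ)
    (hP : IsUnit P.det) (hQ : IsUnit Q.det) (hD : (P * M * Q).IsDiag) :
    Nat.card {i // ¬ IsUnit ((P * M * Q) i i)} =
      Module.finrank K
        (Module.End.eigenspace (M.map (algebraMap R K)).mulVecLin (algebraMap R K γ)) := by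
  classical
  let k := IsLocalRing.ResidueField R
  let N := M.map (algebraMap R k)
  have h_ker : LinearMap.ker N.mulVecLin =
      Module.End.eigenspace N.mulVecLin (algebraMap R k γ) := by
    rw [IsLocalRing.ResidueField.algebraMap_eq, (IsLocalRing.residue_eq_zero_iff γ).2 hγ,
      Module.End.eigenspace_zero]
  have h_nullity : Module.finrank k (LinearMap.ker N.mulVecLin) =
      Module.finrank K
        (Module.End.eigenspace (M.map (algebraMap R K)).mulVecLin (algebraMap R K γ)) := by
    rw [h_ker, ← rank_map_aeval_eq_finrank_eigenspace k hM hfγ,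
      ← rank_map_aeval_eq_finrank_eigenspace K hM hfγ]
    exact rank_map_eq_rank_map_of_isIdempotentElem (isIdempotentElem_aeval hM hfγ) _ _
  have h_rank : N.rank = Nat.card {i // IsUnit ((P * M * Q) i i)} :=
    rank_map_residue_eq_card_isUnit hP hQ hD
  have h_rank_nullity : N.rank + Module.finrank k (LinearMap.ker N.mulVecLin) =
      Fintype.card ι := by
    rw [Matrix.rank, LinearMap.finrank_range_add_finrank_ker, Module.finrank_pi]
  rw [h_rank, h_nullity, Nat.card_eq_fintype_card] at h_rank_nullity
  rw [Nat.card_eq_fintype_card, Fintype.card_subtype_compl, ← h_rank_nullity,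
    Nat.add_sub_cancel_left]

theorem stmt19_general (K : Type*) [Field K] [Algebra R K] (hM : aeval M ((X - C γ) * f) = 0)
    (hf : IsUnit (f.eval 0)) (hγ : ¬ IsUnit γ) (hP : IsUnit P.det) (hQ : IsUnit Q.det)
    (hD : (P * M * Q).IsDiag) :
    (∀ i, IsUnit ((P * M * Q) i i) ∨ Associated ((P * M * Q) i i) γ) ∧
      Nat.card {i // ¬ IsUnit ((P * M * Q) i i)} =
        Module.finrank K
          (Module.End.eigenspace (M.map (algebraMap R K)).mulVecLin (algebraMap R K γ)) := by
  obtain ⟨u, hu⟩ := (isUnit_eval_of_isUnit_eval_zero hf hγ).exists_left_inv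
  have hMu : aeval M ((X - C γ) * (C u * f)) = 0 := by
    rw [mul_left_comm, map_mul, hM, mul_zero]
  have hfuγ : (C u * f).eval γ = 1 := by rw [eval_C_mul, hu]
  have hfu0 : IsUnit ((C u * f).eval 0) := by
    rw [eval_C_mul]
    exact (IsUnit.of_mul_eq_one _ hu).mul hf
  exact ⟨isUnit_or_associated_of_isDiag hMu hfuγ hfu0 hP hQ hD,
    card_not_isUnit_eq_finrank_eigenspace K hMu hfuγ hγ hP hQ hD⟩

end LocalRing

section ElementaryDivisors

variable {p n : ℕ} [Fact p.Prime] {D : Matrix (Fin n) (Fin n) ℤ_[p]} {γ : ℤ_[p]} {d : ℕ}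

theorem eCount_eq_card_emultiplicity (a : ℕ) :
    eCount p D a = Nat.card {i // emultiplicity (p : ℤ_[p]) (D i i) = a} := by
  refine Nat.card_congr (Equiv.subtypeEquivRight fun i => ?_)
  rw [emultiplicity_eq_coe, and_iff_right_iff_imp]
  rintro ⟨-, h⟩ h_zero
  exact h (h_zero ▸ dvd_zero _)

theorem eCount_of_isUnit_or_associated {c : ℕ} (hpγ : (p : ℤ_[p]) ∣ γ)
    (hγd : (p : ℤ_[p]) ^ d ∣ γ) (hγd' : ¬ (p : ℤ_[p]) ^ (d + 1) ∣ γ)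
    (hD : ∀ i, IsUnit (D i i) ∨ Associated (D i i) γ)
    (hc : Nat.card {i // ¬ IsUnit (D i i)} = c) :
    eCount p D 0 = n - c ∧ eCount p D d = c ∧ ∀ j : ℕ, j ≠ 0 → j ≠ d → eCount p D j = 0 := by
  classical
  have hd : d ≠ 0 := by
    rintro rfl
    exact hγd' (by simpa using hpγ)
  have h_mult (i : Fin n) :
      emultiplicity (p : ℤ_[p]) (D i i) = (if IsUnit (D i i) then 0 else d : ℕ) := by
    split_ifs with hi
    · exact emultiplicity_of_isUnit_right PadicInt.prime_p.not_isUnit hi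
    · rw [emultiplicity_eq_of_associated_right ((hD i).resolve_left hi)]
      exact emultiplicity_eq_coe.2 ⟨hγd, hγd'⟩
  have h_iff (a : ℕ) (i : Fin n) : (emultiplicity (p : ℤ_[p]) (D i i) = a) ↔
      if IsUnit (D i i) then a = 0 else a = d := by
    rw [h_mult, Nat.cast_inj]
    split_ifs <;> exact eq_comm
  have h_compl := Fintype.card_subtype_compl fun i => ¬ IsUnit (D i i)
  simp only [not_not, Fintype.card_fin] at h_compl
  rw [Nat.card_eq_fintype_card] at hc
  simp only [eCount_eq_card_emultiplicity, h_iff, Nat.card_eq_fintype_card]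
  refine ⟨?_, ?_, fun j hj0 hjd => ?_⟩
  · simp [hd.symm, h_compl, hc]
  · simp [hd, hc]
  · simp [hj0, hjd]

theorem isUnit_padicInt_iff_not_dvd {a : ℤ_[p]} : IsUnit a ↔ ¬ (p : ℤ_[p]) ∣ a := by
  rw [← PadicInt.norm_lt_one_iff_dvd, ← PadicInt.not_isUnit_iff, not_not]

end ElementaryDivisors

theorem stmt19 (p n : ℕ) [Fact p.Prime] (hn : 1 ≤ n)
    (X : Matrix (Fin n) (Fin n) ℤ_[p])
    (hnotnil : ¬ IsNilpotent (X.map (fun x => PadicInt.toZMod x)))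
    (α β γ : ℤ_[p]) (hab : α ≠ β) (hag : α ≠ γ) (hbg : β ≠ γ)
    (hvanish : (X - α • 1) * (X - β • 1) * (X - γ • 1) = 0)
    (hpa : ¬ (p : ℤ_[p]) ∣ α) (hpb : ¬ (p : ℤ_[p]) ∣ β) (hpg : (p : ℤ_[p]) ∣ γ)
    (d : ℕ) (hd1 : (p : ℤ_[p]) ^ d ∣ γ) (hd2 : ¬ (p : ℤ_[p]) ^ (d + 1) ∣ γ)
    (c : ℕ)
    (hc : c = Module.finrank ℚ_[p] (LinearMap.ker
        ((X.map (fun x : ℤ_[p] => (x : ℚ_[p]))).mulVecLin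
          - (γ : ℚ_[p]) • (LinearMap.id : (Fin n → ℚ_[p]) →ₗ[ℚ_[p]] (Fin n → ℚ_[p])))))
    (hmin : minpoly (ZMod p) (X.map (fun x => PadicInt.toZMod x))
      ∣ Polynomial.X * (Polynomial.X - C (PadicInt.toZMod α))
          * (Polynomial.X - C (PadicInt.toZMod β)))
    (hα0 : PadicInt.toZMod α ≠ 0) (hβ0 : PadicInt.toZMod β ≠ 0)
    (hαβ : PadicInt.toZMod α ≠ PadicInt.toZMod β)
    (P Q : Matrix (Fin n) (Fin n) ℤ_[p]) (hP : IsUnit P.det) (hQ : IsUnit Q.det)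
    (hdiag : ∀ i j, i ≠ j → (P * X * Q) i j = 0) :
    eCount p (P * X * Q) 0 = n - c
    ∧ eCount p (P * X * Q) d = c
    ∧ ∀ j : ℕ, j ≠ 0 → j ≠ d → eCount p (P * X * Q) j = 0 := by
  have hX : aeval X ((Polynomial.X - C γ) * ((Polynomial.X - C α) * (Polynomial.X - C β))) = 0 := by
    rw [mul_comm]
    simpa [Algebra.algebraMap_eq_smul_one] using hvanish
  have hf : IsUnit (((Polynomial.X - C α) * (Polynomial.X - C β)).eval 0) := by
    simpa using (isUnit_padicInt_iff_not_dvd.2 hpa).mul (isUnit_padicInt_iff_not_dvd.2 hpb)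
  have hγ : ¬ IsUnit γ := fun h => isUnit_padicInt_iff_not_dvd.1 h hpg
  obtain ⟨hD, h_card⟩ := stmt19_general ℚ_[p] hX hf hγ hP hQ fun i j => hdiag i j
  exact eCount_of_isUnit_or_associated hpg hd1 hd2 hD <| by
    rw [h_card, hc, Module.End.eigenspace_def]
    rfl
end
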